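/- arXiv:2310.10112 — 5 statements merged into one kernel-verified Lean document; each statement's English description precedes it below -/
import Mathlib

section
/- Let f and m be integers with 3 ≤ m and m ∣ f. Then the image of the Stickelberger element θ_f under the restriction map ℚ[(ℤ/fℤ)ˣ] → ℚ[(ℤ/mℤ)ˣ] equals ( ∏_ℓ (1 − [ℓ]⁻¹) ) · θ_m, where the product runs over the primes ℓ dividing f but not dividing m, and [ℓ] denotes the group-algebra basis element given by the class of ℓ in (ℤ/mℤ)ˣ. -/
open MonoidAlgebra Finset
open scoped Classical

/-- The class of a natural number `a` coprime to `m` in `(ℤ/mℤ)ˣ`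
(junk value `1` when `a` is not invertible mod `m`). -/
noncomputable def unitOf (m a : ℕ) : (ZMod m)ˣ :=
  if h : IsUnit ((a : ZMod m)) then h.unit else 1

/-- The Stickelberger element `θ_N = -∑_a (a/N - 1/2)·[a]⁻¹ ∈ ℚ[(ℤ/Nℤ)ˣ]`,
the sum running over the integers `1 ≤ a ≤ N` coprime to `N`. -/
noncomputable def stickelberger (N : ℕ) : MonoidAlgebra ℚ (ZMod N)ˣ :=
  ∑ a ∈ (Finset.Icc 1 N).filter (fun a => Nat.Coprime a N),
    MonoidAlgebra.single (unitOf N a)⁻¹ (-((a : ℚ) / N - 1 / 2))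

lemma unitOf_val {m a : ℕ} (h : a.Coprime m) : ((unitOf m a : (ZMod m)ˣ) : ZMod m) = a := by
  have h' : IsUnit (a : ZMod m) := (ZMod.isUnit_iff_coprime a m).2 h
  simp [unitOf, h']

lemma unitOf_congr {m a b : ℕ} (h : (a : ZMod m) = b) : unitOf m a = unitOf m b := by
  unfold unitOf
  simp only [h]

lemma unitOf_mul {m a b : ℕ} (ha : a.Coprime m) (hb : b.Coprime m) :
    unitOf m (a * b) = unitOf m a * unitOf m b := by
  apply Units.ext
  rw [Units.val_mul, unitOf_val ha, unitOf_val hb, unitOf_val (Nat.Coprime.mul_left ha hb)]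
  push_cast
  rfl

/-- Partial Stickelberger sums of level `g` in `ℚ[(ℤ/mℤ)ˣ]`. -/
noncomputable def partialSum (m g : ℕ) (S : Finset ℕ) : MonoidAlgebra ℚ (ZMod m)ˣ :=
  ∑ a ∈ Finset.range g, if a.Coprime m ∧ ∀ p ∈ S, ¬ p ∣ a then
    MonoidAlgebra.single (unitOf m a)⁻¹ (1 / 2 - (a : ℚ) / g) else 0

lemma sum_range_mul_aux {M : Type*} [AddCommMonoid M] (F : ℕ → M) (m k : ℕ) :
    ∑ a ∈ Finset.range (m * k), F a
      = ∑ j ∈ Finset.range k, ∑ i ∈ Finset.range m, F (m * j + i) := by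
  induction k with
  | zero => simp
  | succ k ih => rw [Nat.mul_succ, Finset.sum_range_add, ih, Finset.sum_range_succ]

lemma gauss_aux (k : ℕ) (c d : ℚ) :
    ∑ j ∈ Finset.range k, (c - d * j) = k * c - d * (k * (k - 1) / 2) := by
  induction k with
  | zero => simp
  | succ k ih => rw [Finset.sum_range_succ, ih]; push_cast; ring

lemma partialSum_empty (m k : ℕ) (hm : 0 < m) (hk : 0 < k) :
    partialSum m (m * k) ∅ = partialSum m m ∅ := by
  unfold partialSum
  rw [sum_range_mul_aux, Finset.sum_comm]
  refine Finset.sum_congr rfl fun i _ => ?_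
  have hu : ∀ j, unitOf m (m * j + i) = unitOf m i := fun j => unitOf_congr (by simp)
  have hc : ∀ j, (m * j + i).Coprime m ↔ i.Coprime m := fun j => by simp
  simp only [hu, hc, Finset.notMem_empty, false_imp_iff, implies_true, and_true]
  split_ifs with h
  · have hs : ∀ (u : (ZMod m)ˣ) (G : ℕ → ℚ), ∑ j ∈ Finset.range k, MonoidAlgebra.single u (G j)
        = MonoidAlgebra.single u (∑ j ∈ Finset.range k, G j) := fun u G =>
      (map_sum (MonoidAlgebra.singleAddHom u) G (Finset.range k)).symm
    rw [hs]
    congr 1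
    have hm' : (m : ℚ) ≠ 0 := by exact_mod_cast hm.ne'
    have hk' : (k : ℚ) ≠ 0 := by exact_mod_cast hk.ne'
    have := gauss_aux k (1 / 2 - (i : ℚ) / (m * k)) (1 / k)
    rw [show (1 / 2 - (i : ℚ) / m) = k * (1 / 2 - (i : ℚ) / (m * k)) - 1 / k * (k * (k - 1) / 2) by
      field_simp; ring, ← this]
    refine Finset.sum_congr rfl fun j _ => ?_
    push_cast
    field_simp
    ring
  · simp

lemma partialSum_insert (m g l : ℕ) (S : Finset ℕ) (hl : l.Prime) (hlm : ¬ l ∣ m)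
    (hlS : l ∉ S) (hS : ∀ p ∈ S, p.Prime) :
    partialSum m (l * g) (insert l S)
      = partialSum m (l * g) S - MonoidAlgebra.single (unitOf m l)⁻¹ (1 : ℚ) * partialSum m g S := by
  have hcl : l.Coprime m := (Nat.Prime.coprime_iff_not_dvd hl).2 hlm
  have key : MonoidAlgebra.single (unitOf m l)⁻¹ (1 : ℚ) * partialSum m g S
      = ∑ a ∈ Finset.range (l * g), if l ∣ a then (if a.Coprime m ∧ ∀ p ∈ S, ¬ p ∣ a then
    MonoidAlgebra.single (unitOf m a)⁻¹ (1 / 2 - (a : ℚ) / (l * g : ℕ)) else 0) else 0 := by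
    rw [sum_range_mul_aux]
    unfold partialSum
    rw [Finset.mul_sum]
    refine Finset.sum_congr rfl fun b _ => ?_
    rw [Finset.sum_eq_single 0]
    · have h1 : (l * b).Coprime m ↔ b.Coprime m := by
        rw [Nat.coprime_mul_iff_left]; tauto
      have h2 : (∀ p ∈ S, ¬ p ∣ l * b) ↔ ∀ p ∈ S, ¬ p ∣ b := by
        refine forall₂_congr fun p hp => not_congr ?_
        refine ⟨fun h => ?_, fun h => h.mul_left l⟩
        rcases (hS p hp).dvd_mul.1 h with h | h
        · exact absurd ((Nat.prime_dvd_prime_iff_eq (hS p hp) hl).1 h ▸ hp) hlS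
        · exact h
      simp only [add_zero, h1, h2, dvd_mul_right, if_true]
      split_ifs with h
      · rw [MonoidAlgebra.single_mul_single, unitOf_mul hcl h.1, mul_inv, one_mul]
        congr 2
        have : (l : ℚ) ≠ 0 := by exact_mod_cast hl.ne_zero
        push_cast
        rw [mul_div_mul_left _ _ this]
      · simp
    · intro i hi hi0
      rw [if_neg]
      rw [Nat.dvd_add_right (dvd_mul_right _ _)]
      exact fun h => absurd (Nat.le_of_dvd (Nat.pos_of_ne_zero hi0) h)
        (not_le.2 (Finset.mem_range.1 hi))
    · intro h; exact absurd (Finset.mem_range.2 hl.pos) h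
  rw [key]
  unfold partialSum
  rw [← Finset.sum_sub_distrib]
  refine Finset.sum_congr rfl fun a _ => ?_
  simp only [Finset.forall_mem_insert]
  by_cases h1 : l ∣ a <;> simp [h1]

lemma partialSum_eq (m : ℕ) (hm : 0 < m) (S : Finset ℕ) :
    (∀ p ∈ S, p.Prime ∧ ¬ p ∣ m) → ∀ k, 0 < k → (∀ p ∈ S, p ∣ k) →
    partialSum m (m * k) S
      = (∏ l ∈ S, (1 - MonoidAlgebra.single (unitOf m l)⁻¹ (1 : ℚ))) * partialSum m m ∅ := by
  induction S using Finset.induction_on with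
  | empty => intro _ k hk _; simp [partialSum_empty m k hm hk]
  | insert l S hlS ih =>
    intro hS k hk hd
    have hl := hS l (Finset.mem_insert_self _ _)
    have hS' : ∀ p ∈ S, p.Prime ∧ ¬ p ∣ m := fun p hp => hS p (Finset.mem_insert_of_mem hp)
    have hd' : ∀ p ∈ S, p ∣ k := fun p hp => hd p (Finset.mem_insert_of_mem hp)
    have h1 := ih hS' k hk hd'
    obtain ⟨q, rfl⟩ := hd l (Finset.mem_insert_self _ _)
    have hq : 0 < q := Nat.pos_of_mul_pos_left hk
    have h2 := ih hS' q hq fun p hp => by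
      rcases (hS' p hp).1.dvd_mul.1 (hd' p hp) with h | h
      · exact absurd ((Nat.prime_dvd_prime_iff_eq (hS' p hp).1 hl.1).1 h ▸ hp) hlS
      · exact h
    rw [mul_left_comm] at h1 ⊢
    rw [partialSum_insert m (m * q) l S hl.1 hl.2 hlS fun p hp => (hS' p hp).1, h1, h2,
      Finset.prod_insert hlS]
    ring

lemma sum_Icc_aux {M : Type*} [AddCommMonoid M] (F : ℕ → M) (N : ℕ) (h0 : F 0 = 0) (hN : F N = 0) :
    ∑ a ∈ Finset.Icc 1 N, F a = ∑ a ∈ Finset.range N, F a := by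
  have h1 : ∑ a ∈ Finset.range (N + 1), F a = ∑ a ∈ Finset.range N, F a := by
    rw [Finset.sum_range_succ, hN, add_zero]
  rw [← h1]
  refine Finset.sum_subset (fun a ha => ?_) (fun a ha hb => ?_)
  · simp only [Finset.mem_Icc, Finset.mem_range] at *; omega
  · have : a = 0 := by simp only [Finset.mem_Icc, Finset.mem_range] at *; omega
    rw [this, h0]

lemma map_stickelberger (f m : ℕ) (hm : 3 ≤ m) (hf : 3 ≤ f) (hdvd : m ∣ f) :
    MonoidAlgebra.mapDomainRingHom ℚ
        (Units.map (ZMod.castHom hdvd (ZMod m)).toMonoidHom) (stickelberger f)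
      = partialSum m f (f.primeFactors \ m.primeFactors) := by
  unfold stickelberger partialSum
  have hcop : ∀ a : ℕ, a.Coprime f ↔
      (a.Coprime m ∧ ∀ p ∈ f.primeFactors \ m.primeFactors, ¬ p ∣ a) := by
    intro a
    constructor
    · intro h
      refine ⟨h.coprime_dvd_right hdvd, fun p hp hpa => ?_⟩
      have hp' := Nat.mem_primeFactors.1 (Finset.mem_sdiff.1 hp).1
      exact Nat.not_coprime_of_dvd_of_dvd hp'.1.one_lt hpa hp'.2.1 h
    · rintro ⟨h1, h2⟩
      refine Nat.Coprime.symm (Nat.coprime_of_dvd fun p hp hpf hpa => ?_)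
      by_cases hpm : p ∣ m
      · exact Nat.not_coprime_of_dvd_of_dvd hp.one_lt hpa hpm h1
      · refine h2 p ?_ hpa
        simp only [Finset.mem_sdiff, Nat.mem_primeFactors]
        exact ⟨⟨hp, hpf, by omega⟩, fun h => hpm h.2.1⟩
  simp only [← hcop]
  rw [map_sum, Finset.sum_filter, sum_Icc_aux]
  · refine Finset.sum_congr rfl fun a _ => ?_
    split_ifs with h
    · rw [MonoidAlgebra.mapDomainRingHom_apply, MonoidAlgebra.mapDomain_single]
      congr 1
      · rw [map_inv]
        congr 1
        apply Units.ext
        rw [unitOf_val (h.coprime_dvd_right hdvd)]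
        simp [unitOf_val h]
      · ring
    · rfl
  · rw [if_neg]; rw [Nat.coprime_zero_left]; omega
  · rw [if_neg]; rw [Nat.coprime_self]; omega

theorem stickelberger_norm (f m : ℕ) (hm : 3 ≤ m) (hf : 3 ≤ f) (hdvd : m ∣ f) :
    MonoidAlgebra.mapDomainRingHom ℚ
        (Units.map (ZMod.castHom hdvd (ZMod m)).toMonoidHom) (stickelberger f)
      = (∏ ℓ ∈ f.primeFactors \ m.primeFactors,
          (1 - MonoidAlgebra.single (unitOf m ℓ)⁻¹ (1 : ℚ))) * stickelberger m := by
  have h1 : stickelberger m = partialSum m m ∅ := by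
    unfold stickelberger partialSum
    rw [Finset.sum_filter, sum_Icc_aux]
    · refine Finset.sum_congr rfl fun a _ => ?_
      simp
    · rw [if_neg]; rw [Nat.coprime_zero_left]; omega
    · rw [if_neg]; rw [Nat.coprime_self]; omega
  rw [map_stickelberger f m hm hf hdvd, h1]
  obtain ⟨k, rfl⟩ := hdvd
  have hS : ∀ p ∈ (m * k).primeFactors \ m.primeFactors, p.Prime ∧ p ∣ m * k ∧ ¬ p ∣ m := by
    intro p hp
    simp only [Finset.mem_sdiff, Nat.mem_primeFactors] at hp
    exact ⟨hp.1.1, hp.1.2.1, fun h => hp.2 ⟨hp.1.1, h, by omega⟩⟩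
  refine partialSum_eq m (by omega) _ (fun p hp => ⟨(hS p hp).1, (hS p hp).2.2⟩) k ?_ fun p hp => ?_
  · rcases Nat.eq_zero_or_pos k with rfl | h
    · omega
    · exact h
  · exact ((hS p hp).1.dvd_mul.1 (hS p hp).2.1).resolve_left (hS p hp).2.2
end

section
/- Let m ≥ 3 be a squarefree integer with m ≡ 3 (mod 4), and let t be the number of prime divisors of m. Define the integer S = ∑_a J(m|a)·(a² − 4m·a), where the sum runs over the odd integers a with 1 ≤ a ≤ 4m and J(m|a) denotes the Jacobi symbol (which vanishes when gcd(a, m) > 1). Then 2^(t+4) divides S if m ≡ 7 (mod 8), and 2^(t+3) divides S if m ≡ 3 (mod 8). -/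
open Finset

/-- The nontrivial character mod 4. -/
def wFour (a : ℤ) : ℤ := if a % 4 = 1 then 1 else if a % 4 = 3 then -1 else 0

/-- The basic quadratic Stickelberger functional. -/
def tSum (f : ℤ → ℤ) (N : ℕ) : ℤ := ∑ a ∈ range N, f a * ((a : ℤ) ^ 2 - N * a)

/-- Partly principal product of Legendre symbols. -/
def phiFun (D Q : Finset ℕ) (a : ℤ) : ℤ :=
  (∏ p ∈ D, jacobiSym a p) * ∏ p ∈ Q \ D, jacobiSym a p ^ 2

lemma sum_refl_aux (n : ℕ) (f g : ℕ → ℤ) (h : ∀ i j, i + j + 1 = n → f i = g j) :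
    ∑ i ∈ range n, f i = ∑ i ∈ range n, g i := by
  rw [← Finset.sum_range_reflect]
  refine Finset.sum_congr rfl fun i hi => ?_
  rw [mem_range] at hi
  exact h _ _ (by omega)

lemma sum_fold_aux (n : ℕ) (f g : ℕ → ℤ) (h : ∀ i j, i < n → i + j + 1 = 2 * n → f i + f j = g i) :
    ∑ i ∈ range (2 * n), f i = ∑ i ∈ range n, g i := by
  rw [two_mul, Finset.sum_range_add, ← Finset.sum_range_reflect (fun i => f (n + i)),
    ← Finset.sum_add_distrib]
  refine Finset.sum_congr rfl fun i hi => ?_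
  rw [mem_range] at hi
  exact h _ _ hi (by omega)

lemma sum_fold_odd_aux (n : ℕ) (f g : ℕ → ℤ) (h : ∀ i j, i < n → i + j = 2 * n → f i + f j = g i) :
    ∑ i ∈ range (2 * n + 1), f i = ∑ i ∈ range n, g i + f n := by
  rw [show 2 * n + 1 = (n + 1) + n by ring, Finset.sum_range_add,
    ← Finset.sum_range_reflect (fun i => f (n + 1 + i)), sum_range_succ, add_right_comm,
    ← Finset.sum_add_distrib]
  congr 1
  refine Finset.sum_congr rfl fun i hi => ?_
  rw [mem_range] at hi
  exact h _ _ hi (by omega)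

lemma sum_even_odd_aux (n : ℕ) (f : ℕ → ℤ) :
    ∑ i ∈ range (2 * n), f i = ∑ i ∈ range n, (f (2 * i) + f (2 * i + 1)) := by
  induction n with
  | zero => simp
  | succ n ih => rw [mul_add, mul_one, sum_range_succ, sum_range_succ, ih, sum_range_succ]; ring

lemma sum_block_aux (p N : ℕ) (f : ℕ → ℤ) :
    ∑ i ∈ range (p * N), f i = ∑ k ∈ range p, ∑ a ∈ range N, f (k * N + a) := by
  induction p with
  | zero => simp
  | succ n ih => rw [add_mul, one_mul, Finset.sum_range_add, ih, sum_range_succ]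

lemma sum_mult_aux (p N : ℕ) (hp : 0 < p) (f : ℕ → ℤ) :
    ∑ i ∈ range (p * N), (if p ∣ i then f i else 0) = ∑ a ∈ range N, f (p * a) := by
  induction N with
  | zero => simp
  | succ n ih =>
    rw [mul_add, mul_one, Finset.sum_range_add, ih, sum_range_succ]
    congr 1
    rw [Finset.sum_eq_single 0]
    · simp
    · intro b hb hb0
      rw [mem_range] at hb
      rw [if_neg]
      intro h
      rw [Nat.dvd_add_right (Dvd.intro _ rfl)] at h
      have := Nat.le_of_dvd (by omega) h
      omega
    · intro h; simp at h; omega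

lemma wFour_odd (k : ℤ) : wFour (2 * k + 1) = if k % 2 = 0 then 1 else -1 := by
  unfold wFour; split_ifs <;> omega

lemma wFour_even (k : ℤ) : wFour (2 * k) = 0 := by
  unfold wFour; split_ifs <;> omega

lemma wFour_eq (a : ℤ) : wFour a = ZMod.χ₄ a := by
  rw [ZMod.χ₄_int_eq_if_mod_four]; unfold wFour; split_ifs <;> omega

lemma wFour_mul (a b : ℤ) : wFour (a * b) = wFour a * wFour b := by
  simp only [wFour_eq]; push_cast; rw [map_mul]

/-- antiperiodic functions sum to zero -/
lemma sum_antiper (h : ℕ) (f : ℤ → ℤ) (hf : ∀ a, f (a + h) = - f a) :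
    ∑ a ∈ range (2 * h), f a = 0 := by
  rw [two_mul, Finset.sum_range_add, ← Finset.sum_add_distrib]
  apply Finset.sum_eq_zero
  intro a _
  have := hf a
  push_cast
  rw [add_comm (h : ℤ), this]; ring

lemma tSum_scale (p N : ℕ) (f : ℤ → ℤ) (hper : ∀ a (k : ℤ), f (a + k * N) = f a)
    (h0 : ∑ a ∈ range N, f a = 0) : tSum f (p * N) = p * tSum f N := by
  unfold tSum
  rw [sum_block_aux, Finset.sum_comm]
  have hG : ∀ p : ℕ, 2 * ∑ k ∈ range p, (k : ℤ) = p * (p - 1) := by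
    intro p
    induction p with
    | zero => simp
    | succ n ih => rw [sum_range_succ, mul_add, ih]; push_cast; ring
  obtain ⟨C, hC⟩ : ∃ C : ℤ, ∀ a : ℤ, ∑ k ∈ range p, ((k * N + a) ^ 2 - (p * N) * (k * N + a))
      = p * (a ^ 2 - N * a) + C := by
    refine ⟨∑ k ∈ range p, ((k * N : ℤ) ^ 2 - (p * N) * (k * N)), fun a => ?_⟩
    have e : ∀ k ∈ range p, ((k * N + a) ^ 2 - (p * N) * (k * N + a) : ℤ)
      = ((k * N : ℤ) ^ 2 - (p * N) * (k * N)) + (k * (2 * N * a) + (a ^ 2 - p * N * a)) := by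
      intro k _; ring
    rw [Finset.sum_congr rfl e, Finset.sum_add_distrib, Finset.sum_add_distrib, ← Finset.sum_mul,
      Finset.sum_const, card_range, nsmul_eq_mul]
    linear_combination (N * a : ℤ) * hG p
  have : ∀ a ∈ range N, ∑ k ∈ range p, f ((k * N + a : ℕ) : ℤ) *
      (((k * N + a : ℕ) : ℤ) ^ 2 - (p * N : ℕ) * ((k * N + a : ℕ) : ℤ))
      = p * (f a * ((a : ℤ) ^ 2 - N * a)) + C * f a := by
    intro a _
    have e : ∀ k ∈ range p, f ((k * N + a : ℕ) : ℤ) *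
      (((k * N + a : ℕ) : ℤ) ^ 2 - (p * N : ℕ) * ((k * N + a : ℕ) : ℤ)) =
      f a * ((k * N + a) ^ 2 - (p * N) * (k * N + a)) := by
      intro k _
      push_cast
      rw [add_comm _ (a : ℤ), hper]
    rw [Finset.sum_congr rfl e, ← Finset.mul_sum, hC]; ring
  rw [Finset.sum_congr rfl this, Finset.sum_add_distrib, ← Finset.mul_sum, ← Finset.mul_sum, h0]
  ring

lemma tSum_euler (p N : ℕ) (hp : 0 < p) (f : ℤ → ℤ) (hper : ∀ a (k : ℤ), f (a + k * N) = f a)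
    (h0 : ∑ a ∈ range N, f a = 0) (hmul : ∀ a : ℤ, f (p * a) = f p * f a) :
    tSum (fun a => f a * if (p : ℤ) ∣ a then 0 else 1) (p * N) = p * (1 - p * f p) * tSum f N := by
  have h1 : tSum (fun a => f a * if (p : ℤ) ∣ a then 0 else 1) (p * N)
      = tSum f (p * N) - ∑ i ∈ range (p * N), (if p ∣ i then
        f i * ((i : ℤ) ^ 2 - (p * N : ℕ) * i) else 0) := by
    unfold tSum
    rw [← Finset.sum_sub_distrib]
    refine Finset.sum_congr rfl fun i _ => ?_
    simp only [Int.natCast_dvd_natCast]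
    split_ifs <;> ring
  rw [h1, tSum_scale p N f hper h0, sum_mult_aux p N hp]
  have : ∀ a ∈ range N, f ((p * a : ℕ) : ℤ) * (((p * a : ℕ) : ℤ) ^ 2 - (p * N : ℕ) * ((p * a : ℕ) : ℤ))
      = (p ^ 2 * f p) * (f a * ((a : ℤ) ^ 2 - N * a)) := by
    intro a _
    push_cast
    rw [hmul]; ring
  rw [Finset.sum_congr rfl this, ← Finset.mul_sum]
  unfold tSum
  ring

lemma tSum_odd (N : ℕ) (f : ℤ → ℤ) (hper : ∀ a (k : ℤ), f (a + k * N) = f a)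
    (hodd : ∀ a, f (-a) = - f a) : tSum f N = 0 := by
  rcases N with _ | n
  · simp [tSum]
  unfold tSum
  rw [sum_range_succ']
  have : ∑ k ∈ range n, f ((k + 1 : ℕ) : ℤ) * (((k + 1 : ℕ) : ℤ) ^ 2 - (n + 1 : ℕ) * ((k + 1 : ℕ) : ℤ))
     = ∑ k ∈ range n, - (f ((k + 1 : ℕ) : ℤ) * (((k + 1 : ℕ) : ℤ) ^ 2 - (n + 1 : ℕ) * ((k + 1 : ℕ) : ℤ))) := by
    apply sum_refl_aux
    intro i j hij
    have e : ((i + 1 : ℕ) : ℤ) = -((j + 1 : ℕ) : ℤ) + 1 * ((n + 1 : ℕ) : ℤ) := by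
      push_cast; omega
    rw [e, hper, hodd]; ring
  rw [Finset.sum_neg_distrib] at this
  have h2 : ∑ k ∈ range n, f ((k + 1 : ℕ) : ℤ) * (((k + 1 : ℕ) : ℤ) ^ 2 - (n + 1 : ℕ) * ((k + 1 : ℕ) : ℤ)) = 0 := by
    omega
  rw [h2]; simp

lemma wFour_antiper (M : ℕ) (hM : M % 2 = 1) (a : ℤ) : wFour (a + 2 * M) = - wFour a := by
  unfold wFour; split_ifs <;> omega

lemma tSum_eight (M : ℕ) (hM : M % 2 = 1) (f : ℤ → ℤ) (hper : ∀ a (k : ℤ), f (a + k * M) = f a) :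
    (8 : ℤ) ∣ tSum (fun a => wFour a * f a) (4 * M) := by
  unfold tSum
  rw [show 4 * M = 2 * M + 2 * M by ring, Finset.sum_range_add, ← Finset.sum_add_distrib]
  apply Finset.dvd_sum
  intro a _
  push_cast
  have h1 : wFour (2 * M + a) = - wFour a := by rw [add_comm, wFour_antiper M hM]
  have h2 : f (2 * M + a) = f a := by rw [add_comm, hper]
  rw [h1, h2]
  rcases Nat.even_or_odd' a with ⟨k, rfl | rfl⟩
  · push_cast; rw [wFour_even]; simp
  · obtain ⟨n, rfl⟩ : ∃ n, M = 2 * n + 1 := ⟨M / 2, by omega⟩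
    push_cast
    exact ⟨wFour (2 * k + 1) * f (2 * k + 1) * (-(2 * n + 1) * (k - n)), by ring⟩

lemma tSum_sixtyfour (n : ℕ) (hn : n % 2 = 1) (E : ℤ → ℤ)
    (hper : ∀ a (k : ℤ), E (a + k * (2 * n + 1 : ℕ)) = E a)
    (hodd : ∀ a, E (-a) = - E a) (htwo : ∀ a, E (2 * a) = E a) :
    (64 : ℤ) ∣ tSum (fun a => wFour a * E a) (4 * (2 * n + 1)) := by
  have hE0 : E 0 = 0 := by have := hodd 0; simp at this; omega
  -- the weighted half sum vanishes
  have hY : ∑ k ∈ range n, ((k : ℤ) + 1) * E (k + 1) = 0 := by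
    have X1 : ∑ j ∈ range (2 * n), ((j : ℤ) + 1) * E (j + 1)
        = ∑ k ∈ range n, (2 * ((k : ℤ) + 1) - (2 * n + 1)) * E (k + 1) := by
      apply sum_fold_aux
      intro i j _ hij
      have e : (j : ℤ) + 1 = -(i + 1) + 1 * (2 * n + 1 : ℕ) := by push_cast; omega
      rw [e, hper, hodd]; push_cast; ring
    have X2 : ∑ j ∈ range (2 * n), ((j : ℤ) + 1) * E (j + 1)
        = ∑ k ∈ range n, (4 * ((k : ℤ) + 1) - (2 * n + 1)) * E (k + 1) := by
      rw [sum_even_odd_aux, Finset.sum_add_distrib]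
      have A : ∑ k ∈ range n, (((2 * k : ℕ) : ℤ) + 1) * E ((2 * k : ℕ) + 1)
          = ∑ k ∈ range n, (2 * ((k : ℤ) + 1) - (2 * n + 1)) * E (k + 1) := by
        apply sum_refl_aux
        intro i j hij
        have e : ((2 * i : ℕ) : ℤ) + 1 = -(2 * (j + 1)) + 1 * (2 * n + 1 : ℕ) := by
          push_cast; omega
        rw [e, hper, hodd, htwo]; push_cast; ring
      rw [A, ← Finset.sum_add_distrib]
      refine Finset.sum_congr rfl fun k _ => ?_
      have e : ((2 * k + 1 : ℕ) : ℤ) + 1 = 2 * (k + 1) := by push_cast; ring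
      rw [e, htwo]; ring
    have X3 := X2.symm.trans X1
    rw [← sub_eq_zero, ← Finset.sum_sub_distrib] at X3
    have : 2 * ∑ k ∈ range n, ((k : ℤ) + 1) * E (k + 1) = 0 := by
      rw [← X3, Finset.mul_sum]
      refine Finset.sum_congr rfl fun k _ => ?_
      ring
    omega
  -- reduce the functional
  have hT : tSum (fun a => wFour a * E a) (4 * (2 * n + 1))
      = -16 * (2 * n + 1) * ∑ k ∈ range n, (if k % 2 = 0 then 1 else -1) * (((k : ℤ) + 1) * E (k + 1)) := by
    unfold tSum
    rw [show 4 * (2 * n + 1) = 2 * (2 * (2 * n + 1)) by ring, sum_even_odd_aux]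
    rw [sum_fold_aux (2 * n + 1) _ (fun k => 2 * ((if k % 2 = 0 then 1 else -1) * E (2 * k + 1) *
      ((2 * k + 1) ^ 2 - 4 * (2 * n + 1) * (2 * k + 1))))]
    · rw [sum_fold_odd_aux n _ (fun k => 16 * (2 * n + 1) *
        ((if k % 2 = 0 then 1 else -1) * E (2 * k + 1) * (n - k)))]
      · have hEm : E (2 * (n : ℤ) + 1) = 0 := by
          have := hper 0 1
          push_cast at this
          rw [← hE0, ← this]; ring_nf
        rw [hEm, ← Finset.mul_sum]
        have : ∑ k ∈ range n, ((if k % 2 = 0 then (1 : ℤ) else -1) * E (2 * k + 1) * (n - k))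
          = ∑ k ∈ range n, -((if k % 2 = 0 then 1 else -1) * (((k : ℤ) + 1) * E (k + 1))) := by
          apply sum_refl_aux
          intro i j hij
          have e : 2 * (i : ℤ) + 1 = -(2 * (j + 1)) + 1 * (2 * n + 1 : ℕ) := by
            push_cast; omega
          have e2 : (n : ℤ) - i = j + 1 := by omega
          have e3 : (i % 2 = 0) ↔ (j % 2 = 0) := by omega
          rw [e, e2, hper, hodd, htwo]
          simp only [e3]; ring
        rw [this, Finset.sum_neg_distrib]; ring
      · intro i j hi hij
        have e : 2 * (j : ℤ) + 1 = -(2 * i + 1) + 2 * (2 * n + 1 : ℕ) := by push_cast; omega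
        have e3 : (j % 2 = 0) ↔ (i % 2 = 0) := by omega
        simp only [e, e3, hper, hodd]
        push_cast
        ring
    · intro i j hi hij
      have e : ((2 * j + 1 : ℕ) : ℤ) = -((2 * i + 1 : ℕ) : ℤ) + 4 * (2 * n + 1 : ℕ) := by
        push_cast; omega
      have hw : wFour (-((2 * i + 1 : ℕ) : ℤ) + 4 * (2 * n + 1 : ℕ)) = - wFour (2 * i + 1) := by
        unfold wFour; push_cast; split_ifs <;> omega
      have e4 : ((i : ℤ) % 2 = 0) ↔ (i % 2 = 0) := by omega
      have e5 : ∀ k : ℕ, wFour ((2 * k : ℕ) : ℤ) = 0 := fun k => by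
        push_cast; exact wFour_even k
      simp only [e5, zero_mul, zero_add, e, hw, hper, hodd]
      push_cast
      rw [wFour_odd]
      simp only [e4]
      ring
  rw [hT]
  have : ∑ k ∈ range n, (if k % 2 = 0 then (1 : ℤ) else -1) * (((k : ℤ) + 1) * E (k + 1))
      = ∑ k ∈ range n, ((if k % 2 = 0 then (1 : ℤ) else -1) - 1) * (((k : ℤ) + 1) * E (k + 1)) := by
    simp only [sub_mul, one_mul]
    rw [Finset.sum_sub_distrib, hY, sub_zero]
  have h4 : (4 : ℤ) ∣ ∑ k ∈ range n, (if k % 2 = 0 then (1 : ℤ) else -1) * (((k : ℤ) + 1) * E (k + 1)) := by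
    rw [this]
    apply Finset.dvd_sum
    intro k _
    split_ifs with hk
    · simp
    · obtain ⟨l, rfl⟩ : ∃ l, k = 2 * l + 1 := ⟨k / 2, by omega⟩
      exact ⟨-(l + 1) * E ((2 * l + 1 : ℕ) + 1), by push_cast; ring⟩
  obtain ⟨c, hc⟩ := h4
  rw [hc]
  exact ⟨-(2 * n + 1) * c, by ring⟩

lemma jac_period (p M : ℕ) (h : p ∣ M) (a k : ℤ) : jacobiSym (a + k * M) p = jacobiSym a p := by
  apply jacobiSym.mod_left'
  obtain ⟨c, rfl⟩ := h
  push_cast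
  rw [show a + k * (p * c) = a + p * (k * c) by ring, Int.add_mul_emod_self_left]

lemma phi_period (D Q : Finset ℕ) (hD : D ⊆ Q) (a k : ℤ) :
    phiFun D Q (a + k * (∏ p ∈ Q, p : ℕ)) = phiFun D Q a := by
  unfold phiFun
  congr 1
  · exact Finset.prod_congr rfl fun p hp => jac_period p _ (Finset.dvd_prod_of_mem _ (hD hp)) a k
  · refine Finset.prod_congr rfl fun p hp => ?_
    rw [jac_period p _ (Finset.dvd_prod_of_mem _ (Finset.mem_sdiff.1 hp).1) a k]

lemma phi_mul (D Q : Finset ℕ) (a b : ℤ) : phiFun D Q (a * b) = phiFun D Q a * phiFun D Q b := by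
  unfold phiFun
  simp only [jacobiSym.mul_left, mul_pow, Finset.prod_mul_distrib]
  ring

lemma jac_prod (D : Finset ℕ) (hD : ∀ p ∈ D, p ≠ 0) (a : ℤ) :
    jacobiSym a (∏ p ∈ D, p) = ∏ p ∈ D, jacobiSym a p := by
  induction D using Finset.induction_on with
  | empty => simp
  | insert p D hp ih =>
    rw [Finset.prod_insert hp, Finset.prod_insert hp, jacobiSym.mul_right', ih]
    · exact fun q hq => hD q (Finset.mem_insert_of_mem hq)
    · exact hD p (Finset.mem_insert_self _ _)
    · exact Finset.prod_ne_zero_iff.2 fun q hq => hD q (Finset.mem_insert_of_mem hq)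

lemma phi_coprime (D Q : Finset ℕ) (hD : D ⊆ Q) (hQ : ∀ p ∈ Q, p ≠ 0) (a : ℤ)
    (ha : ∀ p ∈ Q, a.gcd p = 1) : phiFun D Q a = jacobiSym a (∏ p ∈ D, p) := by
  unfold phiFun
  rw [jac_prod D (fun p hp => hQ p (hD hp))]
  rw [Finset.prod_eq_one (s := Q \ D), mul_one]
  intro p hp
  exact jacobiSym.sq_one (ha p (Finset.mem_sdiff.1 hp).1)

lemma prod_odd_aux (D : Finset ℕ) (hQ : ∀ p ∈ D, p.Prime ∧ p ≠ 2) : (∏ p ∈ D, p) % 2 = 1 := by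
  rw [← Nat.odd_iff]
  apply Finset.prod_induction _ Odd (fun a b => Odd.mul) odd_one
  intro p hp
  exact (hQ p hp).1.odd_of_ne_two (hQ p hp).2

lemma phi_neg_one (D Q : Finset ℕ) (hD : D ⊆ Q) (hQ : ∀ p ∈ Q, p.Prime ∧ p ≠ 2) :
    phiFun D Q (-1) = if (∏ p ∈ D, p) % 4 = 1 then 1 else -1 := by
  have ho := prod_odd_aux D (fun p hp => hQ p (hD hp))
  rw [phi_coprime D Q hD (fun p hp => (hQ p hp).1.ne_zero) _ (fun p _ => by simp),
    jacobiSym.at_neg_one (Nat.odd_iff.2 ho), ZMod.χ₄_nat_eq_if_mod_four, if_neg (by omega)]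

lemma phi_two (D Q : Finset ℕ) (hD : D ⊆ Q) (hQ : ∀ p ∈ Q, p.Prime ∧ p ≠ 2) :
    phiFun D Q 2 = if (∏ p ∈ D, p) % 8 = 1 ∨ (∏ p ∈ D, p) % 8 = 7 then 1 else -1 := by
  have ho := prod_odd_aux D (fun p hp => hQ p (hD hp))
  rw [phi_coprime D Q hD (fun p hp => (hQ p hp).1.ne_zero) _ (fun p hp => ?_),
    jacobiSym.at_two (Nat.odd_iff.2 ho), ZMod.χ₈_nat_eq_if_mod_eight, if_neg (by omega)]
  have := (Nat.coprime_primes Nat.prime_two (hQ p hp).1).2 (hQ p hp).2.symm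
  exact_mod_cast this

lemma phi_insert (D Q : Finset ℕ) (p : ℕ) (hpQ : p ∈ Q) (hpD : p ∉ D) (hp : p.Prime) (a : ℤ) :
    phiFun D Q a = phiFun D (Q.erase p) a * if (p : ℤ) ∣ a then 0 else 1 := by
  unfold phiFun
  have : Q \ D = insert p (Q.erase p \ D) := by
    ext q
    simp only [mem_sdiff, mem_insert, mem_erase]
    by_cases h : q = p
    · subst h; tauto
    · tauto
  rw [this, Finset.prod_insert (by simp)]
  have e : jacobiSym a p ^ 2 = if (p : ℤ) ∣ a then 0 else 1 := by
    split_ifs with h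
    · have : jacobiSym a p = 0 := by
        rw [jacobiSym.eq_zero_iff]
        refine ⟨hp.ne_zero, ?_⟩
        rw [Int.gcd_comm]
        intro h1
        have h2 : p ∣ (p : ℤ).gcd a := Int.dvd_gcd (dvd_refl _) h
        rw [h1] at h2
        exact hp.one_lt.ne' (Nat.dvd_one.1 h2)
      rw [this]; rfl
    · apply jacobiSym.sq_one
      have h' : ¬ p ∣ a.natAbs := fun h2 => h (Int.natCast_dvd.2 h2)
      have := (Nat.Prime.coprime_iff_not_dvd hp).2 h'
      rw [Int.gcd_comm]
      exact this
  rw [e]; ring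

lemma tSum_sum {ι : Type*} (s : Finset ι) (c : ι → ℤ) (f : ι → ℤ → ℤ) (N : ℕ) :
    tSum (fun a => ∑ i ∈ s, c i * f i a) N = ∑ i ∈ s, c i * tSum (f i) N := by
  unfold tSum
  simp only [Finset.sum_mul, Finset.mul_sum]
  rw [Finset.sum_comm]
  simp only [mul_assoc]

/-- the genus indicator -/
def gInd (Q : Finset ℕ) (a : ℤ) : ℤ := ∏ p ∈ Q, if jacobiSym a p = 1 then 1 else 0

lemma gInd_sum (Q : Finset ℕ) (a : ℤ) :
    ∑ D ∈ Q.powerset, phiFun D Q a = 2 ^ Q.card * gInd Q a := by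
  unfold phiFun gInd
  rw [← Finset.prod_add, ← Finset.prod_const, ← Finset.prod_mul_distrib]
  refine Finset.prod_congr rfl fun p _ => ?_
  rcases jacobiSym.trichotomy a p with h | h | h <;> rw [h] <;> norm_num

lemma gInd_period (Q : Finset ℕ) (a k : ℤ) :
    gInd Q (a + k * (∏ p ∈ Q, p : ℕ)) = gInd Q a := by
  unfold gInd
  refine Finset.prod_congr rfl fun p hp => ?_
  rw [jac_period p _ (Finset.dvd_prod_of_mem _ hp) a k]

lemma gInd_four (Q : Finset ℕ) (hQ : ∀ p ∈ Q, p.Prime ∧ p ≠ 2) (a : ℤ) :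
    gInd Q (2 * (2 * a)) = gInd Q a := by
  unfold gInd
  refine Finset.prod_congr rfl fun p hp => ?_
  rw [show 2 * (2 * a) = 4 * a by ring, jacobiSym.mul_left,
    jacobiSym.at_four ((hQ p hp).1.odd_of_ne_two (hQ p hp).2), one_mul]

lemma tSum_smul (c : ℤ) (f : ℤ → ℤ) (N : ℕ) : tSum (fun a => c * f a) N = c * tSum f N := by
  unfold tSum
  simp only [Finset.mul_sum, mul_assoc]

lemma tSum_phi_odd (D Q : Finset ℕ) (hD : D ⊆ Q) (hQ : ∀ p ∈ Q, p.Prime ∧ p ≠ 2)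
    (h1 : (∏ p ∈ D, p) % 4 = 1) :
    tSum (fun a => wFour a * phiFun D Q a) (4 * ∏ p ∈ Q, p) = 0 := by
  apply tSum_odd
  · intro a k
    have hw : wFour (a + k * (4 * ∏ p ∈ Q, p : ℕ)) = wFour a := by
      have : (a + k * (4 * ∏ p ∈ Q, p : ℕ)) % 4 = a % 4 := by
        rw [show a + k * (4 * ∏ p ∈ Q, p : ℕ) = a + 4 * (k * (∏ p ∈ Q, p : ℕ)) by push_cast; ring,
          Int.add_mul_emod_self_left]
      unfold wFour; rw [this]
    have hp := phi_period D Q hD a (4 * k)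
    rw [hw, ← hp]; congr 2; push_cast; ring
  · intro a
    have h := phi_mul D Q (-1) a
    rw [phi_neg_one D Q hD hQ, if_pos h1] at h
    have hw : wFour (-a) = - wFour a := by unfold wFour; split_ifs <;> omega
    rw [hw, ← neg_one_mul a, h]; ring

/-- One Euler factor is even. -/
lemma tSum_step (D Q : Finset ℕ) (hD : D ⊆ Q) (hQ : ∀ p ∈ Q, p.Prime ∧ p ≠ 2) (p : ℕ)
    (hpQ : p ∈ Q) (hpD : p ∉ D) :
    2 * tSum (fun a => wFour a * phiFun D (Q.erase p) a) (4 * ∏ q ∈ Q.erase p, q) ∣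
      tSum (fun a => wFour a * phiFun D Q a) (4 * ∏ q ∈ Q, q) := by
  have hD' : D ⊆ Q.erase p := fun q hq => Finset.mem_erase.2 ⟨fun h => hpD (h ▸ hq), hD hq⟩
  have hQ' : ∀ q ∈ Q.erase p, q.Prime ∧ q ≠ 2 := fun q hq => hQ q (Finset.mem_of_mem_erase hq)
  have hpp := (hQ p hpQ).1
  have hpo := hpp.odd_of_ne_two (hQ p hpQ).2
  have hodd := prod_odd_aux _ hQ'
  set M := ∏ q ∈ Q.erase p, q with hM
  set f : ℤ → ℤ := fun a => wFour a * phiFun D (Q.erase p) a with hf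
  have hanti : ∀ a, f (a + (2 * M : ℕ)) = - f a := by
    intro a
    have hp := phi_period D (Q.erase p) hD' a 2
    rw [← hM] at hp
    simp only [hf]
    push_cast
    rw [wFour_antiper M hodd, ← hp]; ring_nf
  have hper : ∀ a (k : ℤ), f (a + k * (4 * M : ℕ)) = f a := by
    intro a k
    have hw : wFour (a + k * (4 * M : ℕ)) = wFour a := by
      have : (a + k * (4 * M : ℕ)) % 4 = a % 4 := by
        rw [show a + k * (4 * M : ℕ) = a + 4 * (k * (M : ℕ)) by push_cast; ring,
          Int.add_mul_emod_self_left]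
      unfold wFour; rw [this]
    have hp := phi_period D (Q.erase p) hD' a (4 * k)
    rw [← hM] at hp
    simp only [hf]
    rw [hw, ← hp]; congr 2; push_cast; ring
  have h0 : ∑ a ∈ range (4 * M), f a = 0 := by
    rw [show 4 * M = 2 * (2 * M) by ring]
    exact sum_antiper _ f hanti
  have hmul : ∀ a : ℤ, f (p * a) = f p * f a := by
    intro a
    simp only [hf]
    rw [wFour_mul, phi_mul]; ring
  have key := tSum_euler p (4 * M) hpp.pos f hper h0 hmul
  have hN : 4 * ∏ q ∈ Q, q = p * (4 * M) := by
    rw [← Finset.mul_prod_erase Q (fun q => q) hpQ]; ring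
  have hfun : (fun a => wFour a * phiFun D Q a) = fun a => f a * if (p : ℤ) ∣ a then 0 else 1 := by
    funext a
    rw [phi_insert D Q p hpQ hpD hpp a]
    simp only [hf]; ring
  rw [hN, hfun, key]
  apply mul_dvd_mul_right
  apply Dvd.dvd.mul_left
  have hfp : Odd (f p) := by
    simp only [hf]
    apply Odd.mul
    · obtain ⟨k, rfl⟩ := hpo
      push_cast
      rw [wFour_odd]
      split_ifs <;> decide
    · rw [phi_coprime D (Q.erase p) hD' (fun q hq => (hQ' q hq).1.ne_zero)]
      · have hc : (p : ℤ).gcd (∏ q ∈ D, q : ℕ) = 1 := by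
          rw [Int.gcd_natCast_natCast]
          apply Nat.Coprime.prod_right
          intro q hq
          exact (Nat.coprime_primes hpp (hQ q (hD hq)).1).2 (fun h => hpD (h ▸ hq))
        rcases jacobiSym.eq_one_or_neg_one hc with h | h <;> rw [h] <;> decide
      · intro q hq
        rw [Int.gcd_natCast_natCast]
        exact (Nat.coprime_primes hpp (hQ' q hq).1).2 (Finset.mem_erase.1 hq).1.symm
  have hpz : Odd (p : ℤ) := by exact_mod_cast hpo
  exact (odd_one.sub_odd (hpz.mul hfp)).two_dvd

lemma key_dvd (Q : Finset ℕ) : (∀ p ∈ Q, p.Prime ∧ p ≠ 2) → ∀ D ⊆ Q,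
    ((∏ p ∈ D, p) % 4 = 3 → (2 : ℤ) ^ (Q.card + 3) ∣
      tSum (fun a => wFour a * phiFun D Q a) (4 * ∏ p ∈ Q, p)) ∧
    ((∏ p ∈ D, p) % 8 = 7 → (2 : ℤ) ^ (Q.card + 4) ∣
      tSum (fun a => wFour a * phiFun D Q a) (4 * ∏ p ∈ Q, p)) := by
  induction Q using Finset.strongInduction with
  | H Q ih =>
  intro hQ
  have hodd := prod_odd_aux _ hQ
  have hlt : ∀ D ⊆ Q, D ≠ Q → ((∏ p ∈ D, p) % 4 = 3 → (2 : ℤ) ^ (Q.card + 3) ∣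
      tSum (fun a => wFour a * phiFun D Q a) (4 * ∏ p ∈ Q, p)) ∧
    ((∏ p ∈ D, p) % 8 = 7 → (2 : ℤ) ^ (Q.card + 4) ∣
      tSum (fun a => wFour a * phiFun D Q a) (4 * ∏ p ∈ Q, p)) := by
    intro D hD hne
    obtain ⟨p, hpQ, hpD⟩ := Finset.exists_of_ssubset (hD.ssubset_of_ne hne)
    have hD' : D ⊆ Q.erase p := fun q hq => Finset.mem_erase.2 ⟨fun h => hpD (h ▸ hq), hD hq⟩
    have h := ih (Q.erase p) (Finset.erase_ssubset hpQ)
      (fun q hq => hQ q (Finset.mem_of_mem_erase hq)) D hD'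
    have hs := tSum_step D Q hD hQ p hpQ hpD
    have hc := Finset.card_erase_add_one hpQ
    constructor
    · intro h3
      refine dvd_trans ?_ hs
      rw [← hc, show (Q.erase p).card + 1 + 3 = ((Q.erase p).card + 3) + 1 by ring, pow_succ']
      exact mul_dvd_mul_left _ (h.1 h3)
    · intro h3
      refine dvd_trans ?_ hs
      rw [← hc, show (Q.erase p).card + 1 + 4 = ((Q.erase p).card + 4) + 1 by ring, pow_succ']
      exact mul_dvd_mul_left _ (h.2 h3)
  intro D hD
  by_cases hne : D ≠ Q
  · exact hlt D hD hne
  push Not at hne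
  subst hne
  constructor
  · intro h3
    -- sum over all subsets
    have hsum : ∑ C ∈ D.powerset, 1 * tSum (fun a => wFour a * phiFun C D a) (4 * ∏ p ∈ D, p)
        = 2 ^ D.card * tSum (fun a => wFour a * gInd D a) (4 * ∏ p ∈ D, p) := by
      rw [← tSum_sum, ← tSum_smul]
      congr 1
      funext a
      simp only [one_mul]
      rw [← Finset.mul_sum, gInd_sum]; ring
    have h8 := tSum_eight _ hodd (gInd D) (gInd_period D)
    have hdiv : (2 : ℤ) ^ (D.card + 3) ∣
        ∑ C ∈ D.powerset, 1 * tSum (fun a => wFour a * phiFun C D a) (4 * ∏ p ∈ D, p) := by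
      rw [hsum, pow_add]
      exact mul_dvd_mul_left _ h8
    rw [← Finset.add_sum_erase _ _ (Finset.mem_powerset_self D), one_mul] at hdiv
    refine (dvd_add_left (Finset.dvd_sum ?_)).1 hdiv
    intro C hC
    rw [Finset.mem_erase, Finset.mem_powerset] at hC
    rw [one_mul]
    have hCo := prod_odd_aux C (fun p hp => hQ p (hC.2 hp))
    rcases (by omega : (∏ p ∈ C, p) % 4 = 1 ∨ (∏ p ∈ C, p) % 4 = 3) with h1 | h1
    · rw [tSum_phi_odd C D hC.2 hQ h1]; exact dvd_zero _
    · exact (hlt C hC.2 hC.1).1 h1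
  · intro h7
    set E : ℤ → ℤ := fun a => gInd D a - gInd D (-a) + gInd D (2 * a) - gInd D (2 * (-a)) with hE
    set c : Finset ℕ → ℤ := fun C => (1 - phiFun C D (-1)) * (1 + phiFun C D 2) with hc
    have hsum : ∑ C ∈ D.powerset, c C * tSum (fun a => wFour a * phiFun C D a) (4 * ∏ p ∈ D, p)
        = 2 ^ D.card * tSum (fun a => wFour a * E a) (4 * ∏ p ∈ D, p) := by
      rw [← tSum_sum, ← tSum_smul]
      congr 1
      funext a
      have e : 2 ^ D.card * (wFour a * E a) = wFour a * (2 ^ D.card * gInd D a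
        - 2 ^ D.card * gInd D (-a) + 2 ^ D.card * gInd D (2 * a)
        - 2 ^ D.card * gInd D (2 * (-a))) := by
        simp only [hE]; ring
      rw [e]
      simp only [← gInd_sum]
      rw [← Finset.sum_sub_distrib, ← Finset.sum_add_distrib, ← Finset.sum_sub_distrib,
        Finset.mul_sum]
      refine Finset.sum_congr rfl fun C _ => ?_
      rw [phi_mul C D 2 a, phi_mul C D 2 (-a), ← neg_one_mul a, phi_mul C D (-1) a]
      simp only [hc]; ring
    have h64 : (64 : ℤ) ∣ tSum (fun a => wFour a * E a) (4 * ∏ p ∈ D, p) := by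
      obtain ⟨n, hn⟩ : ∃ n, ∏ p ∈ D, p = 2 * n + 1 := ⟨(∏ p ∈ D, p) / 2, by omega⟩
      have hP := gInd_period D
      rw [hn] at hP ⊢
      refine tSum_sixtyfour n (by omega) E ?_ ?_ ?_
      · intro a k
        simp only [hE]
        rw [hP, show -(a + k * (2 * n + 1 : ℕ)) = -a + (-k) * (2 * n + 1 : ℕ) by ring, hP,
          show 2 * (a + k * (2 * n + 1 : ℕ)) = 2 * a + (2 * k) * (2 * n + 1 : ℕ) by ring, hP,
          show 2 * (-a + (-k) * (2 * n + 1 : ℕ)) = 2 * (-a) + (-2 * k) * (2 * n + 1 : ℕ) by ring, hP]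
      · intro a
        simp only [hE, neg_neg]; ring
      · intro a
        simp only [hE]
        rw [show -(2 * a) = 2 * (-a) by ring, gInd_four D hQ, gInd_four D hQ]; ring
    have hcv : ∀ C ⊆ D, c C = if (∏ p ∈ C, p) % 8 = 7 then 4 else 0 := by
      intro C hC
      have hCo := prod_odd_aux C (fun p hp => hQ p (hC hp))
      simp only [hc]
      rw [phi_neg_one C D hC hQ, phi_two C D hC hQ]
      split_ifs <;> omega
    have hdiv : (2 : ℤ) ^ (D.card + 6) ∣
        ∑ C ∈ D.powerset, c C * tSum (fun a => wFour a * phiFun C D a) (4 * ∏ p ∈ D, p) := by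
      rw [hsum, pow_add]
      exact mul_dvd_mul_left _ h64
    have h24 : (2 : ℤ) ^ (D.card + 6) = 4 * 2 ^ (D.card + 4) := by ring
    rw [← Finset.add_sum_erase _ _ (Finset.mem_powerset_self D)] at hdiv
    have h2 := (dvd_add_left (Finset.dvd_sum ?_)).1 hdiv
    · rw [hcv D subset_rfl, if_pos h7, h24] at h2
      exact (mul_dvd_mul_iff_left (by norm_num)).1 h2
    · intro C hC
      rw [Finset.mem_erase, Finset.mem_powerset] at hC
      rw [hcv C hC.2]
      split_ifs with h
      · rw [h24]
        exact mul_dvd_mul_left _ ((hlt C hC.2 hC.1).2 h)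
      · simp

lemma jac_recip (m a : ℕ) (hm4 : m % 4 = 3) (ha : a % 2 = 1) :
    jacobiSym (m : ℤ) a = wFour a * jacobiSym (a : ℤ) m := by
  rcases (by omega : a % 4 = 1 ∨ a % 4 = 3) with h | h
  · rw [jacobiSym.quadratic_reciprocity_one_mod_four' (Nat.odd_iff.2 (by omega)) h]
    have : wFour a = 1 := by unfold wFour; rw [if_pos (by omega)]
    rw [this, one_mul]
  · rw [jacobiSym.quadratic_reciprocity_three_mod_four hm4 h]
    have : wFour a = -1 := by unfold wFour; rw [if_neg (by omega), if_pos (by omega)]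
    rw [this, neg_one_mul]

lemma frozen_sum_eq (m : ℕ) (hm4 : m % 4 = 3) :
    ∑ a ∈ (Finset.Icc 1 (4 * m)).filter (fun a => a % 2 = 1),
          jacobiSym (m : ℤ) a * ((a : ℤ) ^ 2 - 4 * (m : ℤ) * a)
      = tSum (fun a => wFour a * jacobiSym a m) (4 * m) := by
  unfold tSum
  have hs : (Finset.Icc 1 (4 * m)).filter (fun a => a % 2 = 1)
      = (range (4 * m)).filter (fun a => a % 2 = 1) := by
    ext a; simp only [mem_filter, mem_Icc, mem_range]; omega
  rw [hs, Finset.sum_filter]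
  refine Finset.sum_congr rfl fun a _ => ?_
  split_ifs with h
  · rw [jac_recip m a hm4 h]; push_cast; ring
  · have : wFour a = 0 := by unfold wFour; split_ifs <;> omega
    simp only [this]; ring

/-- **2-adic divisibility of the Stickelberger sum of a real quadratic field.**
Let `m ≥ 3` be squarefree with `m ≡ 3 (mod 4)`, with `t` prime divisors, and let
`S = ∑_a J(m|a)·(a² − 4m·a)` over the odd integers `1 ≤ a ≤ 4m` (Jacobi symbol).
Then `2^(t+4) ∣ S` if `m ≡ 7 (mod 8)`, and `2^(t+3) ∣ S` if `m ≡ 3 (mod 8)`. -/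
theorem two_adic_dvd_quadratic_stickelberger_sum
    (m : ℕ) (hm : 3 ≤ m) (hsf : Squarefree m) (hm4 : m % 4 = 3) :
    (m % 8 = 7 →
      (2 : ℤ) ^ (m.primeFactors.card + 4) ∣
        ∑ a ∈ (Finset.Icc 1 (4 * m)).filter (fun a => a % 2 = 1),
          jacobiSym (m : ℤ) a * ((a : ℤ) ^ 2 - 4 * (m : ℤ) * a)) ∧
    (m % 8 = 3 →
      (2 : ℤ) ^ (m.primeFactors.card + 3) ∣
        ∑ a ∈ (Finset.Icc 1 (4 * m)).filter (fun a => a % 2 = 1),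
          jacobiSym (m : ℤ) a * ((a : ℤ) ^ 2 - 4 * (m : ℤ) * a)) := by
  have hQ : ∀ p ∈ m.primeFactors, p.Prime ∧ p ≠ 2 := by
    intro p hp
    refine ⟨Nat.prime_of_mem_primeFactors hp, ?_⟩
    rintro rfl
    have := Nat.dvd_of_mem_primeFactors hp
    omega
  have hprod : ∏ p ∈ m.primeFactors, p = m := Nat.prod_primeFactors_of_squarefree hsf
  have hk := key_dvd m.primeFactors hQ m.primeFactors subset_rfl
  have hfun : (fun a => wFour a * phiFun m.primeFactors m.primeFactors a)
      = fun a => wFour a * jacobiSym a m := by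
    funext a
    unfold phiFun
    rw [← jac_prod _ (fun p hp => (hQ p hp).1.ne_zero), hprod]
    simp
  rw [hfun, hprod] at hk
  rw [frozen_sum_eq m hm4]
  exact ⟨hk.2, fun _ => hk.1 hm4⟩
end

section
/- Let f be an integer with gcd(f, 3) = 1 and let χ be a primitive Dirichlet character of conductor f and order 3 (so f is a squarefree product of t distinct primes, each ≡ 1 (mod 3)). Set S_χ = ∑_{a=1}^{f} χ(a)·(a² − f·a) ∈ ℂ. Then the product S_χ · S_{χ²} is a rational integer divisible by 3^(t−1). -/
open Finset

def cubD (w : ℂ) (n : ℕ) (z : ℂ) : Prop := ∃ x y : ℤ, z = (1 - w) ^ n * (x + y * w)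

section
variable {w : ℂ}

lemma cubD_zero (n : ℕ) : cubD w n 0 := ⟨0, 0, by simp⟩

lemma cubD_add {n : ℕ} {a b : ℂ} (ha : cubD w n a) (hb : cubD w n b) : cubD w n (a + b) := by
  obtain ⟨x, y, rfl⟩ := ha
  obtain ⟨u, v, rfl⟩ := hb
  exact ⟨x + u, y + v, by push_cast; ring⟩

lemma cubD_neg {n : ℕ} {a : ℂ} (ha : cubD w n a) : cubD w n (-a) := by
  obtain ⟨x, y, rfl⟩ := ha
  exact ⟨-x, -y, by push_cast; ring⟩

lemma cubD_sub {n : ℕ} {a b : ℂ} (ha : cubD w n a) (hb : cubD w n b) : cubD w n (a - b) := by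
  rw [sub_eq_add_neg]; exact cubD_add ha (cubD_neg hb)

lemma cubD_sum {ι : Type*} {n : ℕ} (s : Finset ι) (h : ι → ℂ) (hh : ∀ i ∈ s, cubD w n (h i)) :
    cubD w n (∑ i ∈ s, h i) :=
  Finset.sum_induction _ _ (fun _ _ => cubD_add) (cubD_zero n) hh

lemma cubD_mul (hw : w ^ 2 + w + 1 = 0) {m n : ℕ} {a b : ℂ} (ha : cubD w m a) (hb : cubD w n b) :
    cubD w (m + n) (a * b) := by
  obtain ⟨x, y, rfl⟩ := ha
  obtain ⟨u, v, rfl⟩ := hb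
  refine ⟨x * u - y * v, x * v + y * u - y * v, ?_⟩
  push_cast
  rw [pow_add]
  linear_combination ((1 - w) ^ m * (1 - w) ^ n * y * v) * hw

lemma cubD_int (z : ℤ) : cubD w 0 z := ⟨z, 0, by simp⟩

lemma cubD_nat (z : ℕ) : cubD w 0 z := ⟨z, 0, by simp⟩

lemma cubD_lmul (hw : w ^ 2 + w + 1 = 0) {n : ℕ} {a b : ℂ} (ha : cubD w 0 a) (hb : cubD w n b) : cubD w n (a * b) := by
  simpa using cubD_mul hw ha hb

lemma cubD_prod (hw : w ^ 2 + w + 1 = 0) {ι : Type*} (s : Finset ι) (h : ι → ℂ) (hh : ∀ i ∈ s, cubD w 1 (h i)) :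
    cubD w s.card (∏ i ∈ s, h i) := by
  classical
  induction s using Finset.induction_on with
  | empty => exact ⟨1, 0, by simp⟩
  | insert a s ha ih =>
    rw [Finset.prod_insert ha, Finset.card_insert_of_notMem ha, add_comm]
    exact cubD_mul hw (hh a (by simp)) (ih fun i hi => hh i (by simp [hi]))

lemma cubD_mono (hw : w ^ 2 + w + 1 = 0) {m n : ℕ} (h : m ≤ n) {a : ℂ} (ha : cubD w n a) : cubD w m a := by
  obtain ⟨k, rfl⟩ := Nat.exists_eq_add_of_le h
  obtain ⟨x, y, rfl⟩ := ha
  have h1 : cubD w m ((1 - w) ^ m) := ⟨1, 0, by simp⟩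
  have h2 : cubD w 0 (1 - w) := ⟨1, -1, by push_cast; ring⟩
  have h3 : cubD w 0 ((1 - w) ^ k) := by
    induction k with
    | zero => exact ⟨1, 0, by simp⟩
    | succ k ih => rw [pow_succ]; exact cubD_mul hw (ih (by omega)) h2
  have h4 : cubD w 0 ((x : ℂ) + y * w) := ⟨x, y, by simp⟩
  have := cubD_mul hw h1 (cubD_mul hw h3 h4)
  rw [pow_add, mul_assoc]
  simpa using this

lemma cubD_three (hw : w ^ 2 + w + 1 = 0) (z : ℤ) : cubD w 1 (3 * z) := by
  refine ⟨2 * z, z, ?_⟩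
  push_cast
  linear_combination (z : ℂ) * hw

lemma cubD_root (hw : w ^ 2 + w + 1 = 0) {c : ℂ} (hc : c ^ 3 = 1) : cubD w 0 c ∧ cubD w 1 (c - 1) := by
  have : (c - 1) * (c - w) * (c - w ^ 2) = 0 := by
    have h3 : w ^ 3 = 1 := by linear_combination (w - 1) * hw
    linear_combination hc - c ^ 2 * hw + c * w * hw + (- 1) * h3
  rcases mul_eq_zero.1 this with h | h
  · rcases mul_eq_zero.1 h with h | h
    · rw [h]; rw [sub_eq_zero] at h; subst h
      exact ⟨⟨1, 0, by simp⟩, cubD_zero _⟩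
    · rw [sub_eq_zero] at h; subst h
      exact ⟨⟨0, 1, by simp⟩, ⟨-1, 0, by push_cast; ring⟩⟩
  · rw [sub_eq_zero] at h; subst h
    exact ⟨⟨-1, -1, by push_cast; linear_combination hw⟩,
      ⟨-1, -1, by push_cast; ring⟩⟩
end

lemma cub_range_mul (m p : ℕ) (h : ℕ → ℂ) :
    ∑ a ∈ range (p * m), h a = ∑ x ∈ range m, ∑ k ∈ range p, h (x + k * m) := by
  rw [Finset.sum_comm]
  induction p with
  | zero => simp
  | succ p ih =>
    rw [Nat.succ_mul, Finset.sum_range_add, ih, Finset.sum_range_succ]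
    simp [add_comm]

lemma cub_quad (x m M : ℂ) (n : ℕ) :
    ∑ k ∈ range n, ((x + k * m) ^ 2 - M * (x + k * m)) =
      n * (x ^ 2 - M * x) + (2 * x * m - M * m) * (n * (n - 1) / 2)
        + m ^ 2 * (n * (n - 1) * (2 * n - 1) / 6) := by
  induction n with
  | zero => simp
  | succ n ih => rw [Finset.sum_range_succ, ih]; push_cast; ring

def cubg (f a : ℕ) : ℂ := (a : ℂ) ^ 2 - (f : ℂ) * a

lemma cub_distrib (m p : ℕ) (c : ℕ) (hc : p ^ 2 = 6 * c + 1) (x : ℕ) :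
    ∑ k ∈ range p, cubg (p * m) (x + k * m) = p * cubg m x - (m ^ 2 * p * c : ℕ) := by
  have := cub_quad x m (p * m) p
  simp only [cubg]
  push_cast
  rw [this]
  have hc' : (p : ℂ) ^ 2 = 6 * c + 1 := by exact_mod_cast hc
  have : (c : ℂ) = (p ^ 2 - 1) / 6 := by rw [hc']; ring
  rw [this]; ring

/-- distribution relation -/
lemma cub_euler (m p c : ℕ) (hp : 0 < p) (hc : p ^ 2 = 6 * c + 1) (v : ℕ → ℂ)
    (hper : ∀ x k, v (x + k * m) = v x) (e : ℂ) (hmul : ∀ b, v (p * b) = e * v b) :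
    ∑ a ∈ range (p * m), (if p ∣ a then 0 else 1) * v a * cubg (p * m) a =
      p * (1 - p * e) * ∑ x ∈ range m, v x * cubg m x -
        (m ^ 2 * p * c : ℕ) * ∑ x ∈ range m, v x := by
  have h1 : ∑ a ∈ range (p * m), v a * cubg (p * m) a =
      p * ∑ x ∈ range m, v x * cubg m x - (m ^ 2 * p * c : ℕ) * ∑ x ∈ range m, v x := by
    rw [cub_range_mul]
    simp only [hper, ← Finset.mul_sum, cub_distrib m p c hc]
    rw [Finset.mul_sum, Finset.mul_sum, ← Finset.sum_sub_distrib]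
    exact Finset.sum_congr rfl fun x _ => by ring
  have h2 : ∑ a ∈ range (p * m), (if p ∣ a then v a * cubg (p * m) a else 0) =
      p ^ 2 * e * ∑ x ∈ range m, v x * cubg m x := by
    rw [mul_comm p m, cub_range_mul p m, Finset.sum_comm, Finset.mul_sum]
    refine Finset.sum_congr rfl fun k _ => ?_
    rw [Finset.sum_eq_single 0]
    · rw [if_pos (by simp), zero_add, mul_comm k p, hmul]
      simp only [cubg]; push_cast; ring
    · intro b hb hb0
      rw [if_neg]
      intro hd
      have : p ∣ b := (Nat.dvd_add_left (Dvd.intro_left k rfl)).1 hd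
      exact hb0 (Nat.eq_zero_of_dvd_of_lt this (by simpa using hb))
    · intro h; simp at h; omega
  have h3 : ∑ a ∈ range (p * m), (if p ∣ a then 0 else 1) * v a * cubg (p * m) a =
      ∑ a ∈ range (p * m), v a * cubg (p * m) a -
      ∑ a ∈ range (p * m), (if p ∣ a then v a * cubg (p * m) a else 0) := by
    rw [← Finset.sum_sub_distrib]
    refine Finset.sum_congr rfl fun a _ => ?_
    split_ifs <;> ring
  rw [h3, h1, h2]; ring

lemma cub_pow_cases {n : ℕ} (χ : DirichletCharacter ℂ n) (h3 : χ ^ 3 = 1) (a : ZMod n) :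
    (IsUnit a ∧ χ a ^ 3 = 1) ∨ (¬ IsUnit a ∧ χ a = 0) := by
  by_cases ha : IsUnit a
  · left
    refine ⟨ha, ?_⟩
    rw [← MulChar.pow_apply' χ (by norm_num), h3, MulChar.one_apply ha]
  · exact Or.inr ⟨ha, MulChar.map_nonunit _ ha⟩

lemma cub_one_apply {p : ℕ} (hp : p.Prime) (a : ℕ) :
    (1 : DirichletCharacter ℂ p) (a : ZMod p) = if p ∣ a then 0 else 1 := by
  split_ifs with h
  · rw [(ZMod.natCast_eq_zero_iff a p).2 h]
    have := Fact.mk hp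
    exact MulChar.map_zero _
  · apply MulChar.one_apply
    rw [ZMod.isUnit_iff_coprime]
    exact ((Nat.Prime.coprime_iff_not_dvd hp).2 h).symm

/-- hypotheses on a family of characters -/
def cubFam (P : Finset ℕ) (χ : (p : ℕ) → DirichletCharacter ℂ p) : Prop :=
  ∀ p ∈ P, p.Prime ∧ p % 3 = 1 ∧ χ p ^ 3 = 1

section
variable {w : ℂ}

lemma cubD_char (hw : w ^ 2 + w + 1 = 0) {n : ℕ} (χ : DirichletCharacter ℂ n) (h3 : χ ^ 3 = 1) (a : ZMod n) :
    cubD w 0 (χ a) := by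
  rcases cub_pow_cases χ h3 a with h | h
  · exact (cubD_root hw h.2).1
  · rw [h.2]; exact cubD_zero _

lemma cubD_char_sub (hw : w ^ 2 + w + 1 = 0) {n : ℕ} (χ : DirichletCharacter ℂ n) (h3 : χ ^ 3 = 1) (a : ZMod n) :
    cubD w 1 (χ a - (1 : DirichletCharacter ℂ n) a) := by
  rcases cub_pow_cases χ h3 a with h | h
  · rw [MulChar.one_apply h.1]; exact (cubD_root hw h.2).2
  · rw [h.2, MulChar.map_nonunit _ h.1, sub_zero]; exact cubD_zero _

lemma cubD_inner (hw : w ^ 2 + w + 1 = 0) {p : ℕ} [hpf : Fact p.Prime] (hp1 : p % 3 = 1) (χ : DirichletCharacter ℂ p)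
    :
    cubD w 1 (∑ c : ZMod p, χ c) := by
  classical
  by_cases h : χ = 1
  · subst h
    rw [MulChar.sum_one_eq_card_units, ZMod.card_units]
    have := cubD_three hw ((p / 3 : ℕ) : ℤ)
    have h2 : p - 1 = 3 * (p / 3) := by omega
    rw [h2]; push_cast at this ⊢; exact this
  · rw [MulChar.sum_eq_zero_of_ne_one h]; exact cubD_zero _

lemma cub_inner {p : ℕ} [hpf : Fact p.Prime] (χ : DirichletCharacter ℂ p)
    (x m : ℕ) (hm : Nat.Coprime m p) :
    ∑ k ∈ range p, χ ((x + k * m : ℕ) : ZMod p) = ∑ c : ZMod p, χ c := by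
  have hu : IsUnit (m : ZMod p) := (ZMod.isUnit_iff_coprime m p).2 hm
  have hm0 : (m : ZMod p) ≠ 0 := hu.ne_zero
  refine Finset.sum_bij (fun k _ => ((x + k * m : ℕ) : ZMod p)) (fun _ _ => Finset.mem_univ _)
    ?_ ?_ (fun _ _ => rfl)
  · intro a ha b hb hab
    push_cast at hab
    have : (a : ZMod p) = b := mul_right_cancel₀ hm0 (add_left_cancel hab)
    rw [ZMod.natCast_eq_natCast_iff'] at this
    rwa [Nat.mod_eq_of_lt (by simpa using ha), Nat.mod_eq_of_lt (by simpa using hb)] at this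
  · intro b _
    refine ⟨((b - x) * (m : ZMod p)⁻¹).val, by simpa using ZMod.val_lt _, ?_⟩
    push_cast
    rw [ZMod.natCast_zmod_val]
    field_simp
    ring

lemma cub_per (P : Finset ℕ) (χ : (p : ℕ) → DirichletCharacter ℂ p) (x k : ℕ) :
    ∏ q ∈ P, χ q ((x + k * ∏ q ∈ P, q : ℕ) : ZMod q) = ∏ q ∈ P, χ q (x : ZMod q) := by
  refine Finset.prod_congr rfl fun q hq => ?_
  have : ((∏ q ∈ P, q : ℕ) : ZMod q) = 0 :=
    (ZMod.natCast_eq_zero_iff _ _).2 (Finset.dvd_prod_of_mem _ hq)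
  rw [Nat.cast_add, Nat.cast_mul, this]; simp

lemma cub_coprime (P : Finset ℕ) (p : ℕ) (hp : p.Prime) (hP : ∀ q ∈ P, q.Prime) (h : p ∉ P) :
    Nat.Coprime (∏ q ∈ P, q) p := by
  apply Nat.Coprime.prod_left
  intro q hq
  exact (Nat.coprime_primes (hP q hq) hp).2 (by rintro rfl; exact h hq)

lemma cubD_sumchar (hw : w ^ 2 + w + 1 = 0) (P : Finset ℕ) (χ : (p : ℕ) → DirichletCharacter ℂ p) (h : cubFam P χ) :
    cubD w P.card (∑ a ∈ range (∏ p ∈ P, p), ∏ p ∈ P, χ p (a : ZMod p)) := by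
  induction P using Finset.induction_on with
  | empty => exact ⟨1, 0, by simp⟩
  | insert p P hpP ih =>
    have hP : cubFam P χ := fun q hq => h q (by simp [hq])
    obtain ⟨hp, hp1, hp3⟩ := h p (by simp)
    have := Fact.mk hp
    have hcop := cub_coprime P p hp (fun q hq => (hP q hq).1) hpP
    rw [Finset.prod_insert hpP, cub_range_mul, Finset.card_insert_of_notMem hpP]
    simp only [Finset.prod_insert hpP, cub_per]
    simp only [← Finset.sum_mul, cub_inner (χ p) _ _ hcop, ← Finset.mul_sum]
    rw [add_comm]
    exact cubD_mul hw (cubD_inner hw hp1 (χ p)) (ih hP)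

lemma cub_sq {p : ℕ} (hp : p.Prime) (hp1 : p % 3 = 1) : ∃ c, p ^ 2 = 6 * c + 1 := by
  have h2 : p % 2 = 1 := by
    rcases hp.eq_two_or_odd with h | h
    · subst h; omega
    · exact h
  obtain ⟨j, hj⟩ : ∃ j, p = 6 * j + 1 := ⟨p / 6, by omega⟩
  exact ⟨6 * j ^ 2 + 2 * j, by rw [hj]; ring⟩

lemma cubD_cubg (f a : ℕ) : cubD w 0 (cubg f a) := by
  have : cubg f a = (((a : ℤ) ^ 2 - f * a : ℤ) : ℂ) := by simp [cubg]
  rw [this]; exact cubD_int _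

lemma cubD_main (hw : w ^ 2 + w + 1 = 0) (P : Finset ℕ) : ∀ (χ : (p : ℕ) → DirichletCharacter ℂ p), cubFam P χ →
    cubD w (P.card - 1)
      (∑ a ∈ range (∏ p ∈ P, p), (∏ p ∈ P, χ p (a : ZMod p)) * cubg (∏ p ∈ P, p) a) := by
  classical
  induction P using Finset.strongInduction with
  | H P ih =>
  intro χ hχ
  have hdrop : ∀ ψ : (p : ℕ) → DirichletCharacter ℂ p, cubFam P ψ → ∀ p ∈ P, ψ p = 1 →
      cubD w (P.card - 1)
      (∑ a ∈ range (∏ p ∈ P, p), (∏ p ∈ P, ψ p (a : ZMod p)) * cubg (∏ p ∈ P, p) a) := by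
    intro ψ hψ p hpP hp1
    obtain ⟨hp, hpm, -⟩ := hψ p hpP
    obtain ⟨c, hc⟩ := cub_sq hp hpm
    have hQ : cubFam (P.erase p) ψ := fun q hq => hψ q (Finset.mem_of_mem_erase hq)
    have key := cub_euler (∏ q ∈ P.erase p, q) p c hp.pos hc
      (fun a => ∏ q ∈ P.erase p, ψ q (a : ZMod q)) (fun x k => cub_per _ _ _ _)
      (∏ q ∈ P.erase p, ψ q (p : ZMod q))
      (fun b => by simp only [Nat.cast_mul, map_mul, Finset.prod_mul_distrib])
    have hprod : ∏ q ∈ P, q = p * ∏ q ∈ P.erase p, q := (Finset.mul_prod_erase P _ hpP).symm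
    have hterm : ∀ a : ℕ, ∏ q ∈ P, ψ q (a : ZMod q) =
        (if p ∣ a then 0 else 1) * ∏ q ∈ P.erase p, ψ q (a : ZMod q) := by
      intro a
      rw [← Finset.mul_prod_erase P _ hpP, hp1, cub_one_apply hp]
    simp only [hterm]
    rw [hprod, key]
    have hcard : (P.erase p).card = P.card - 1 := Finset.card_erase_of_mem hpP
    refine cubD_sub ?_ ?_
    · rw [mul_assoc]
      refine cubD_lmul hw (cubD_nat p) ?_
      have hI := ih (P.erase p) (Finset.erase_ssubset hpP) ψ hQ
      rw [← hcard]
      rcases Nat.eq_zero_or_pos (P.erase p).card with h0 | h0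
      · rw [Finset.card_eq_zero] at h0
        simp only [h0]
        simp [cubg]
        exact cubD_zero _
      · rw [← Nat.add_sub_cancel' (show 1 ≤ (P.erase p).card from h0)]
        refine cubD_mul hw ?_ hI
        set e := ∏ q ∈ P.erase p, ψ q (p : ZMod q) with he
        have he3 : e ^ 3 = 1 := by
          rw [he, ← Finset.prod_pow]
          refine Finset.prod_eq_one fun q hq => ?_
          rcases cub_pow_cases (ψ q) (hQ q hq).2.2 (p : ZMod q) with h | h
          · exact h.2
          · exfalso
            apply h.1
            rw [ZMod.isUnit_iff_coprime]
            exact (Nat.coprime_primes hp (hQ q hq).1).2 (Finset.ne_of_mem_erase hq).symm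
        have hpe : (1 : ℂ) - p * e = -(p * (e - 1)) - 3 * ((p / 3 : ℕ) : ℤ) := by
          have : (p : ℂ) = 3 * (p / 3 : ℕ) + 1 := by
            have : p = 3 * (p / 3) + 1 := by omega
            exact_mod_cast this
          rw [Int.cast_natCast]
          linear_combination (-1 : ℂ) * this
        rw [hpe]
        exact cubD_sub (cubD_neg (cubD_lmul hw (cubD_nat p) (cubD_root hw he3).2))
          (cubD_three hw _)
    · rw [← hcard]
      exact cubD_lmul hw (cubD_nat _) (cubD_sumchar hw _ ψ hQ)
  -- expansion
  set f := ∏ p ∈ P, p with hf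
  have hexp : ∀ a : ℕ, ∏ p ∈ P, (χ p (a : ZMod p) - (1 : DirichletCharacter ℂ p) (a : ZMod p)) =
      ∏ p ∈ P, χ p (a : ZMod p) + ∑ T ∈ P.powerset.erase P, (-1) ^ (P \ T).card *
        ∏ p ∈ P, (if p ∈ T then χ p else 1) (a : ZMod p) := by
    intro a
    simp only [sub_eq_add_neg]
    rw [Finset.prod_add, ← Finset.add_sum_erase _ _ (Finset.mem_powerset_self P)]
    congr 1
    · simp
    · refine Finset.sum_congr rfl fun T hT => ?_
      have hTP : T ⊆ P := Finset.mem_powerset.1 (Finset.mem_of_mem_erase hT)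
      rw [Finset.prod_neg, ← Finset.prod_sdiff hTP]
      have e1 : ∏ p ∈ P \ T, (if p ∈ T then χ p else 1) (a : ZMod p) =
          ∏ p ∈ P \ T, (1 : DirichletCharacter ℂ p) (a : ZMod p) :=
        Finset.prod_congr rfl fun p hp => by rw [if_neg (Finset.mem_sdiff.1 hp).2]
      have e2 : ∏ p ∈ T, (if p ∈ T then χ p else 1) (a : ZMod p) =
          ∏ p ∈ T, χ p (a : ZMod p) :=
        Finset.prod_congr rfl fun p hp => by rw [if_pos hp]
      rw [e1, e2]; ring
  have hS : ∑ a ∈ range f, (∏ p ∈ P, χ p (a : ZMod p)) * cubg f a =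
      ∑ a ∈ range f, cubg f a *
        (∏ p ∈ P, (χ p (a : ZMod p) - (1 : DirichletCharacter ℂ p) (a : ZMod p))) -
      ∑ T ∈ P.powerset.erase P, (-1) ^ (P \ T).card * ∑ a ∈ range f,
        (∏ p ∈ P, (if p ∈ T then χ p else 1) (a : ZMod p)) * cubg f a := by
    simp only [Finset.mul_sum]
    rw [Finset.sum_comm, ← Finset.sum_sub_distrib]
    refine Finset.sum_congr rfl fun a _ => ?_
    rw [hexp, mul_add, Finset.mul_sum, add_sub_assoc]
    rw [← Finset.sum_sub_distrib, Finset.sum_eq_zero (fun T _ => by ring)]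
    ring
  rw [hS]
  refine cubD_sub ?_ ?_
  · refine cubD_sum _ _ fun a _ => cubD_lmul hw (cubD_cubg f a) ?_
    exact cubD_mono hw (Nat.sub_le _ _)
      (cubD_prod hw _ _ fun p hp => cubD_char_sub hw _ (hχ p hp).2.2 _)
  · refine cubD_sum _ _ fun T hT => ?_
    have hm1 : cubD w 0 ((-1) ^ (P \ T).card : ℂ) := by
      have := cubD_int (w := w) ((-1) ^ (P \ T).card)
      push_cast at this; exact this
    refine cubD_lmul hw hm1 ?_
    have hT1 := Finset.ne_of_mem_erase hT
    have hTP : T ⊆ P := Finset.mem_powerset.1 (Finset.mem_of_mem_erase hT)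
    obtain ⟨p, hpP, hpT⟩ : ∃ p ∈ P, p ∉ T := by
      by_contra! hcon
      exact hT1 (Finset.Subset.antisymm hTP hcon)
    refine hdrop (fun p => if p ∈ T then χ p else 1) ?_ p hpP (by simp [hpT])
    intro q hq
    refine ⟨(hχ q hq).1, (hχ q hq).2.1, ?_⟩
    dsimp only
    split_ifs
    · exact (hχ q hq).2.2
    · simp
end

/-- decomposition of characters -/
lemma cub_decomp (P : Finset ℕ) (hP : ∀ p ∈ P, p.Prime) :
    ∀ ψ : DirichletCharacter ℂ (∏ p ∈ P, p), ψ ^ 3 = 1 →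
    ∃ χ : (p : ℕ) → DirichletCharacter ℂ p, (∀ p, χ p ^ 3 = 1) ∧
      ∀ a : ℕ, ψ (a : ZMod (∏ p ∈ P, p)) = ∏ p ∈ P, χ p (a : ZMod p) := by
  classical
  induction P using Finset.induction_on with
  | empty =>
    intro ψ _
    refine ⟨fun _ => 1, fun _ => one_pow _, fun a => ?_⟩
    have : ψ = 1 := DirichletCharacter.level_one' _ (by simp)
    rw [this, Finset.prod_empty]
    apply MulChar.one_apply
    rw [ZMod.isUnit_iff_coprime]; simp
  | insert p P hpP ih =>
    rw [Finset.prod_insert hpP]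
    set m := ∏ q ∈ P, q with hm
    intro ψ hψ
    have hcop : Nat.Coprime p m :=
      (cub_coprime P p (hP p (by simp)) (fun q hq => hP q (by simp [hq])) hpP).symm
    let E := ZMod.chineseRemainder hcop
    let χ1 : DirichletCharacter ℂ p :=
      { toFun := fun x => ψ (E.symm (x, 1))
        map_one' := by
          have : ((1 : ZMod p), (1 : ZMod m)) = 1 := rfl
          simp [this]
        map_mul' := fun x y => by
          rw [← map_mul, ← map_mul]; simp
        map_nonunit' := fun x hx => by
          apply MulChar.map_nonunit
          intro h
          have := (h.map E)
          rw [RingEquiv.apply_symm_apply, Prod.isUnit_iff] at this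
          exact hx this.1 }
    let χ2 : DirichletCharacter ℂ m :=
      { toFun := fun x => ψ (E.symm (1, x))
        map_one' := by
          have : ((1 : ZMod p), (1 : ZMod m)) = 1 := rfl
          simp [this]
        map_mul' := fun x y => by
          rw [← map_mul, ← map_mul]; simp
        map_nonunit' := fun x hx => by
          apply MulChar.map_nonunit
          intro h
          have := (h.map E)
          rw [RingEquiv.apply_symm_apply, Prod.isUnit_iff] at this
          exact hx this.2 }
    have hcube : ∀ z, IsUnit z → ψ z ^ 3 = 1 := fun z hz => by
      rcases cub_pow_cases ψ hψ z with h | h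
      · exact h.2
      · exact absurd hz h.1
    have h1 : χ1 ^ 3 = 1 := by
      ext u
      rw [MulChar.pow_apply_coe, MulChar.one_apply_coe]
      apply hcube
      exact (Prod.isUnit_iff.2 ⟨u.isUnit, isUnit_one⟩ : IsUnit ((u : ZMod p), (1 : ZMod m))).map
        E.symm
    have h2 : χ2 ^ 3 = 1 := by
      ext u
      rw [MulChar.pow_apply_coe, MulChar.one_apply_coe]
      apply hcube
      exact (Prod.isUnit_iff.2 ⟨isUnit_one, u.isUnit⟩ : IsUnit ((1 : ZMod p), (u : ZMod m))).map
        E.symm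
    obtain ⟨χ, hχ, hχ'⟩ := ih (fun q hq => hP q (by simp [hq])) χ2 h2
    refine ⟨Function.update χ p χ1, ?_, ?_⟩
    · intro q
      by_cases hq : q = p
      · subst hq; simpa using h1
      · simpa [hq] using hχ q
    · intro a
      rw [Finset.prod_insert hpP, Function.update_self]
      have e : ∏ q ∈ P, (Function.update χ p χ1 q) (a : ZMod q) = ∏ q ∈ P, χ q (a : ZMod q) :=
        Finset.prod_congr rfl fun q hq => by
          rw [Function.update_of_ne (by rintro rfl; exact hpP hq)]
      rw [e, ← hχ']
      change _ = ψ (E.symm (a, 1)) * ψ (E.symm (1, a))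
      rw [← map_mul, ← map_mul, Prod.mk_mul_mk, mul_one, one_mul]
      congr 1
      rw [RingEquiv.eq_symm_apply]
      simp
      rfl

lemma cub_one_add_pow {R : Type*} [CommRing R] (y : R) (h : y * y = 0) (n : ℕ) :
    (1 + y) ^ n = 1 + n * y := by
  induction n with
  | zero => simp
  | succ n ih => rw [pow_succ, ih]; push_cast; linear_combination (n : R) * h

/-- if the kernel has exponent prime to 3, contradiction with primitivity -/
lemma cub_cond (f : ℕ) (hf0 : f ≠ 0) (χ : DirichletCharacter ℂ f)
    (hprim : χ.IsPrimitive) (h3 : χ ^ 3 = 1) (p d n : ℕ) (hp : 1 < p) (hfd : f = p * d)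
    (hn : Nat.Coprime n 3)
    (hx : ∀ x : ℕ, Nat.Coprime x f → x ≡ 1 [MOD d] → x ^ n ≡ 1 [MOD f]) : False := by
  have : NeZero f := ⟨hf0⟩
  have hd : d ∣ f := ⟨p, by rw [hfd, mul_comm]⟩
  have hd0 : 0 < d := Nat.pos_of_ne_zero (by rintro rfl; simp at hfd; exact hf0 hfd)
  have hfac : χ.FactorsThrough d := by
    rw [DirichletCharacter.factorsThrough_iff_ker_unitsMap hd]
    intro u hu
    rw [MonoidHom.mem_ker] at hu ⊢
    have hu' : ((u : ZMod f).val : ZMod d) = 1 := by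
      have := congrArg Units.val hu
      rw [ZMod.unitsMap_val] at this
      rw [ZMod.cast_eq_val] at this
      exact this
    have hmod : (u : ZMod f).val ≡ 1 [MOD d] := by
      rw [← ZMod.natCast_eq_natCast_iff]; simpa using hu'
    have hpow := hx _ (ZMod.val_coe_unit_coprime u) hmod
    rw [← ZMod.natCast_eq_natCast_iff] at hpow
    push_cast at hpow
    rw [ZMod.natCast_zmod_val] at hpow
    have hun : u ^ n = 1 := by ext; simpa using hpow
    have a1 : (χ.toUnitHom u) ^ n = 1 := by rw [← map_pow, hun, map_one]
    have a2 : (χ.toUnitHom u) ^ 3 = 1 := by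
      ext
      rw [Units.val_pow_eq_pow_val, MulChar.coe_toUnitHom, ← MulChar.pow_apply_coe, h3,
        MulChar.one_apply_coe]
      rfl
    have := orderOf_dvd_of_pow_eq_one a1
    have := Nat.dvd_gcd this (orderOf_dvd_of_pow_eq_one a2)
    rw [hn, Nat.dvd_one, orderOf_eq_one_iff] at this
    exact this
  have := DirichletCharacter.conductor_le_conductor_mem_conductorSet (χ := χ) hfac
  have h5 : χ.conductor = f := hprim
  have h6 := Nat.le_of_dvd hd0 (DirichletCharacter.conductor_dvd_of_mem_conductorSet (χ := χ) hfac)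
  rw [h5, hfd] at h6
  nlinarith

lemma cub_struct (f : ℕ) (hf : Nat.gcd f 3 = 1) (χ : DirichletCharacter ℂ f)
    (hprim : χ.IsPrimitive) (h3 : χ ^ 3 = 1) :
    Squarefree f ∧ ∀ p ∈ f.primeFactors, p % 3 = 1 := by
  have hf0 : f ≠ 0 := by rintro rfl; simp at hf
  have hne : ∀ p, p.Prime → p ∣ f → Nat.Coprime p 3 := fun p hp hpf =>
    Nat.Coprime.coprime_dvd_left hpf hf
  have hsq : Squarefree f := by
    rw [Nat.squarefree_iff_prime_squarefree]
    rintro p hp ⟨e, he⟩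
    refine cub_cond f hf0 χ hprim h3 p (p * e) p hp.one_lt (by rw [he]; ring)
      (hne p hp ⟨p * e, by rw [he]; ring⟩) ?_
    intro x _ hx
    rw [← ZMod.natCast_eq_natCast_iff]
    obtain ⟨k, hk⟩ := (Nat.modEq_iff_dvd.1 hx.symm)
    have hfz : ((p : ZMod f) * p * e) = 0 := by
      have : ((p * p * e : ℕ) : ZMod f) = 0 := by rw [← he]; simp
      exact_mod_cast this
    have hxz : (x : ZMod f) = 1 + p * e * k := by
      have : (x : ℤ) = 1 + p * e * k := by push_cast at hk; linarith
      have := congrArg (Int.cast : ℤ → ZMod f) this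
      push_cast at this; exact this
    push_cast
    rw [hxz, cub_one_add_pow]
    · linear_combination (k : ZMod f) * hfz
    · linear_combination (e * k * k : ZMod f) * hfz
  refine ⟨hsq, fun p hpf => ?_⟩
  have hp := Nat.prime_of_mem_primeFactors hpf
  have hd := Nat.dvd_of_mem_primeFactors hpf
  by_contra hp1
  obtain ⟨m, hm⟩ := hd
  have hc3 := hne p hp ⟨m, hm⟩
  have hp0 : p % 3 ≠ 0 := fun h => by
    have h4 : 3 ∣ p := Nat.dvd_of_mod_eq_zero h
    have := Nat.dvd_gcd h4 (dvd_refl 3)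
    rw [hc3] at this; omega
  have hpm : Nat.Coprime p m := by
    rw [hm] at hsq; exact Nat.coprime_of_squarefree_mul hsq
  refine cub_cond f hf0 χ hprim h3 p m (p - 1) hp.one_lt hm ?_ ?_
  · rw [Nat.coprime_comm, Nat.Prime.coprime_iff_not_dvd Nat.prime_three]
    have := hp.one_lt
    omega
  · intro x hxf hx
    rw [hm, ← Nat.modEq_and_modEq_iff_modEq_mul hpm]
    refine ⟨?_, by simpa using hx.pow (p - 1)⟩
    rw [← Nat.totient_prime hp]
    exact Nat.ModEq.pow_totient (Nat.Coprime.coprime_dvd_right ⟨m, hm⟩ hxf)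

/-- **3-adic divisibility for cyclic cubic fields.** Let `f` be coprime to `3` and `χ` a
primitive Dirichlet character of conductor `f` and order `3`, `t` the number of prime
divisors of `f`. With `S_χ = ∑_{a=1}^{f} χ(a)(a² − f·a)`, the product `S_χ · S_{χ²}` is a
rational integer divisible by `3^(t−1)`. -/
theorem cubic_stickelberger_int_dvd
    (f : ℕ) (hf : Nat.gcd f 3 = 1) (χ : DirichletCharacter ℂ f)
    (hprim : χ.IsPrimitive) (hord : orderOf χ = 3) :
    ∃ z : ℤ,
      (∑ a ∈ Finset.Icc 1 f, χ (a : ZMod f) * ((a : ℂ) ^ 2 - (f : ℂ) * a)) *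
        (∑ a ∈ Finset.Icc 1 f, (χ ^ 2) (a : ZMod f) * ((a : ℂ) ^ 2 - (f : ℂ) * a)) = (z : ℂ) ∧
      (3 : ℤ) ^ (f.primeFactors.card - 1) ∣ z := by
  have h3 : χ ^ 3 = 1 := by rw [← hord]; exact pow_orderOf_eq_one χ
  obtain ⟨hsq, hpr⟩ := cub_struct f hf χ hprim h3
  have hf0 : f ≠ 0 := hsq.ne_zero
  have : NeZero f := ⟨hf0⟩
  obtain ⟨w, hw, hwc⟩ : ∃ w : ℂ, w ^ 2 + w + 1 = 0 ∧ star w = w ^ 2 := by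
    have hr := Complex.isPrimitiveRoot_exp 3 (by norm_num)
    set w := Complex.exp (2 * Real.pi * Complex.I / (3 : ℕ)) with hwdef
    have h1 : w ^ 3 = 1 := hr.pow_eq_one
    have h2 : w ≠ 1 := hr.ne_one (by norm_num)
    have hw : w ^ 2 + w + 1 = 0 := by
      have : (w - 1) * (w ^ 2 + w + 1) = 0 := by linear_combination h1
      exact (mul_eq_zero.1 this).resolve_left (sub_ne_zero.2 h2)
    refine ⟨w, hw, ?_⟩
    have hn : ‖w‖ = 1 := Complex.norm_eq_one_of_pow_eq_one h1 (by norm_num)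
    have hi : w⁻¹ = star w := Complex.inv_eq_conj hn
    rw [← hi]
    have hw0 : w ≠ 0 := by rintro h; rw [h] at h1; norm_num at h1
    field_simp
    exact h1.symm
  have hD : cubD w (f.primeFactors.card - 1)
      (∑ a ∈ Finset.Icc 1 f, χ (a : ZMod f) * ((a : ℂ) ^ 2 - (f : ℂ) * a)) := by
    have e : ∑ a ∈ Finset.Icc 1 f, χ (a : ZMod f) * ((a : ℂ) ^ 2 - (f : ℂ) * a) =
        ∑ a ∈ range f, χ (a : ZMod f) * cubg f a := by
      have h1 : ∑ a ∈ range (f + 1), χ (a : ZMod f) * cubg f a =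
          ∑ a ∈ range f, χ (a : ZMod f) * cubg f a := by
        rw [Finset.sum_range_succ]; simp [cubg]; right; ring
      rw [← h1, Finset.range_eq_Ico, Finset.sum_eq_sum_Ico_succ_bot (by omega)]
      have h0 : cubg f 0 = 0 := by simp [cubg]
      rw [h0, mul_zero, zero_add]
      rfl
    rw [e]
    have hprod : ∏ p ∈ f.primeFactors, p = f := Nat.prod_primeFactors_of_squarefree hsq
    have gen : ∀ (P : Finset ℕ) (n : ℕ) (ψ : DirichletCharacter ℂ n), ψ ^ 3 = 1 →
        (∀ p ∈ P, p.Prime) → (∀ p ∈ P, p % 3 = 1) → ∏ p ∈ P, p = n →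
        cubD w (P.card - 1) (∑ a ∈ range n, ψ (a : ZMod n) * cubg n a) := by
      intro P n ψ hψ hP hP1 hn
      subst hn
      obtain ⟨φ, hφ, hφ'⟩ := cub_decomp P hP ψ hψ
      simp only [hφ']
      exact cubD_main hw P φ fun p hp => ⟨hP p hp, hP1 p hp, hφ p⟩
    exact gen _ f χ h3 (fun p hp => Nat.prime_of_mem_primeFactors hp) hpr hprod
  have hconj : ∑ a ∈ Finset.Icc 1 f, (χ ^ 2) (a : ZMod f) * ((a : ℂ) ^ 2 - (f : ℂ) * a) =
      star (∑ a ∈ Finset.Icc 1 f, χ (a : ZMod f) * ((a : ℂ) ^ 2 - (f : ℂ) * a)) := by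
    rw [star_sum]
    refine Finset.sum_congr rfl fun a _ => ?_
    have hinv : χ ^ 2 = χ⁻¹ := eq_inv_of_mul_eq_one_left (by rw [← pow_succ]; exact h3)
    rw [star_mul', MulChar.star_apply', hinv]
    simp
  obtain ⟨x, y, hxy⟩ := hD
  rw [hconj, hxy]
  refine ⟨3 ^ (f.primeFactors.card - 1) * (x ^ 2 - x * y + y ^ 2), ?_, Dvd.intro _ rfl⟩
  have hs : star ((1 - w) ^ (f.primeFactors.card - 1) * (x + y * w)) =
      (1 - w ^ 2) ^ (f.primeFactors.card - 1) * (x + y * w ^ 2) := by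
    rw [star_mul', star_pow, star_sub, star_add, star_mul', hwc]; simp
  rw [hs]
  have e3 : (1 - w) * (1 - w ^ 2) = 3 := by linear_combination (w - 2) * hw
  have e4 : (x + y * w) * (x + y * w ^ 2) = (x : ℂ) ^ 2 - x * y + y ^ 2 := by
    linear_combination ((x : ℂ) * y + y ^ 2 * (w - 1)) * hw
  push_cast
  rw [← e3, ← e4, mul_pow]
  ring
end

section
/- The 2-Sylow subgroup of the ideal class group of K is isomorphic to (ℤ/2ℤ)^(n−1); in particular the 2-class group of K is elementary of 2-rank n − 1. -/
open NumberField

namespace DengLi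

lemma jac_core {p : ℕ} (hp : p.Prime) {A D z : ℤ} (h : (p : ℤ) ∣ A ^ 2 - D * z ^ 2)
    (hz : ¬ (p : ℤ) ∣ z) (hD : ¬ (p : ℤ) ∣ D) : jacobiSym D p = 1 := by
  have hpI : Prime (p : ℤ) := Nat.prime_iff_prime_int.mp hp
  have cop : ∀ x : ℤ, ¬ (p : ℤ) ∣ x → Int.gcd x p = 1 := by
    intro x hx
    have := (Int.isCoprime_iff_gcd_eq_one).mp ((Prime.coprime_iff_not_dvd hpI).mpr hx)
    rwa [Int.gcd_comm]
  have hA : ¬ (p : ℤ) ∣ A := by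
    intro hA
    have h1 : (p : ℤ) ∣ D * z ^ 2 := by
      have := dvd_sub (dvd_pow hA (two_ne_zero)) h
      simpa using this
    rcases hpI.dvd_or_dvd h1 with h2 | h2
    · exact hD h2
    · exact hz (hpI.dvd_of_dvd_pow h2)
  have e : jacobiSym (A ^ 2) p = jacobiSym (D * z ^ 2) p :=
    jacobiSym.mod_left' (Int.modEq_iff_dvd.mpr h).symm
  rw [jacobiSym.mul_left, jacobiSym.pow_left, jacobiSym.pow_left,
    jacobiSym.sq_one (cop _ hA), jacobiSym.sq_one (cop _ hz), mul_one] at e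
  exact e.symm

lemma jac_prod {ι : Type*} [DecidableEq ι] (T : Finset ι) (f : ι → ℕ) (p : ℕ) :
    jacobiSym ((∏ i ∈ T, f i : ℕ) : ℤ) p = ∏ i ∈ T, jacobiSym (f i) p := by
  induction T using Finset.induction_on with
  | empty => simp
  | insert a s ha ih => rw [Finset.prod_insert ha, Finset.prod_insert ha, ← ih, Nat.cast_mul,
      jacobiSym.mul_left]

lemma exists_prim {m d : ℤ} (h : ∃ a b z : ℤ, z ≠ 0 ∧ a ^ 2 - m * b ^ 2 = d * z ^ 2) :
    ∃ a b z : ℤ, z ≠ 0 ∧ a ^ 2 - m * b ^ 2 = d * z ^ 2 ∧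
      ∀ p : ℕ, p.Prime → (p : ℤ) ∣ a → (p : ℤ) ∣ b → (p : ℤ) ∣ z → False := by
  classical
  have h' : ∃ k : ℕ, ∃ a b z : ℤ, z.natAbs = k ∧ z ≠ 0 ∧ a ^ 2 - m * b ^ 2 = d * z ^ 2 := by
    obtain ⟨a, b, z, h1, h2⟩ := h
    exact ⟨_, a, b, z, rfl, h1, h2⟩
  obtain ⟨a, b, z, h0, h1, h2⟩ := Nat.find_spec h'
  refine ⟨a, b, z, h1, h2, ?_⟩
  rintro p hp ⟨a', rfl⟩ ⟨b', rfl⟩ ⟨z', rfl⟩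
  have hp0 : (p : ℤ) ≠ 0 := by exact_mod_cast hp.ne_zero
  have hz' : z' ≠ 0 := by rintro rfl; simp at h1
  refine Nat.find_min h' (m := z'.natAbs) ?_ ⟨a', b', z', rfl, hz', ?_⟩
  · rw [← h0, Int.natAbs_mul, Int.natAbs_natCast]
    have := Int.natAbs_pos.mpr hz'
    have := hp.two_le
    nlinarith
  · apply mul_left_cancel₀ (pow_ne_zero 2 hp0)
    linear_combination h2

/-- The arithmetic data of the Deng–Li family. -/
structure Data (n : ℕ) (l : Fin n → ℕ) (i0 i1 : Fin n) (m : ℕ) : Prop where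
  even : Even n
  two_le : 2 ≤ n
  hp : ∀ i, (l i).Prime
  inj : Function.Injective l
  ne : i1 ≠ i0
  h0 : l i0 % 8 = 3
  hi : ∀ i, i ≠ i0 → l i % 8 = 5
  h01 : jacobiSym (l i0 : ℤ) (l i1) = -1
  h0j : ∀ j, j ≠ i0 → j ≠ i1 → jacobiSym (l i0 : ℤ) (l j) = 1
  hij : ∀ i j, i ≠ i0 → j ≠ i0 → i ≠ j → jacobiSym (l i : ℤ) (l j) = -1
  hm : m = ∏ i, l i

variable {n : ℕ} {l : Fin n → ℕ} {i0 i1 : Fin n} {m : ℕ}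

lemma not_dvd_prod (D : Data n l i0 i1 m) (i : Fin n) (T : Finset (Fin n)) (h : i ∉ T) :
    ¬ (l i) ∣ ∏ j ∈ T, l j := by
  intro h1
  obtain ⟨j, hj, h2⟩ := ((D.hp i).prime.dvd_finsetProd_iff _).mp h1
  have := D.inj ((Nat.prime_dvd_prime_iff_eq (D.hp i) (D.hp j)).mp h2)
  exact h (this ▸ hj)

lemma odd_l (D : Data n l i0 i1 m) (i : Fin n) : l i % 2 = 1 := by
  by_cases h : i = i0
  · subst h; have := D.h0; omega
  · have := D.hi i h; omega

lemma not_dvd_unit {p : ℕ} (hp : p.Prime) (h2 : p % 2 = 1) {s : ℤ} (hs : s = 1 ∨ s = -1) (e : ℕ)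
    {N : ℕ} (hN : ¬ p ∣ N) : ¬ (p : ℤ) ∣ s * 2 ^ e * (N : ℤ) := by
  have hpI : Prime (p : ℤ) := Nat.prime_iff_prime_int.mp hp
  intro h
  rcases hpI.dvd_or_dvd h with h | h
  · rcases hpI.dvd_or_dvd h with h | h
    · rcases hs with rfl | rfl
      · exact hpI.not_isUnit (isUnit_of_dvd_one h)
      · exact hpI.not_isUnit (isUnit_of_dvd_one ((dvd_neg).mp h))
    · have := hpI.dvd_of_dvd_pow h
      have h3 : p ∣ 2 := by exact_mod_cast this
      have := (Nat.prime_dvd_prime_iff_eq hp Nat.prime_two).mp h3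
      omega
  · exact hN (by exact_mod_cast h)

lemma jac_s (D : Data n l i0 i1 m) (i : Fin n) (hi : i ≠ i0) {s : ℤ} (hs : s = 1 ∨ s = -1) :
    jacobiSym s (l i) = 1 := by
  have h5 := D.hi i hi
  rcases hs with rfl | rfl
  · exact jacobiSym.one_left _
  · rw [jacobiSym.at_neg_one (Nat.odd_iff.mpr (odd_l D i)), ZMod.χ₄_nat_one_mod_four (by omega)]

lemma jac_two (D : Data n l i0 i1 m) (i : Fin n) (hi : i ≠ i0) :
    jacobiSym 2 (l i) = -1 := by
  have h5 := D.hi i hi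
  rw [jacobiSym.at_two (Nat.odd_iff.mpr (odd_l D i)), ZMod.χ₈_nat_eq_if_mod_eight]
  simp [h5]; omega

lemma jac_T (D : Data n l i0 i1 m) (i : Fin n) (hi : i ≠ i0) (T : Finset (Fin n))
    (hT : i0 ∉ T) (hiT : i ∉ T) :
    jacobiSym ((∏ j ∈ T, l j : ℕ) : ℤ) (l i) = (-1) ^ T.card := by
  rw [jac_prod, Finset.prod_congr rfl (g := fun _ => (-1 : ℤ)), Finset.prod_const]
  intro j hj
  exact D.hij j i (fun h => hT (h ▸ hj)) hi (fun h => hiT (h ▸ hj))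

theorem norm_lemma (D : Data n l i0 i1 m) (T : Finset (Fin n)) (hT : i0 ∉ T) (e : ℕ)
    (he : e ≤ 1) (s : ℤ) (hs : s = 1 ∨ s = -1) (a b z : ℤ) (hz : z ≠ 0)
    (h : a ^ 2 - m * b ^ 2 = (s * 2 ^ e * ((∏ i ∈ T, l i : ℕ) : ℤ)) * z ^ 2) :
    (T = ∅ ∧ e = 0 ∧ s = 1) ∨ (T = {i1} ∧ e = 1) := by
  obtain ⟨a, b, z, -, h, hprim⟩ := exists_prim ⟨a, b, z, hz, h⟩
  have hmi : ∀ i, m = l i * ∏ j ∈ Finset.univ.erase i, l j := fun i => by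
    rw [D.hm, Finset.mul_prod_erase _ _ (Finset.mem_univ i)]
  have ndm : ∀ i, ¬ (l i : ℤ) ∣ ((∏ j ∈ Finset.univ.erase i, l j : ℕ) : ℤ) := by
    intro i h
    exact not_dvd_prod D i _ (Finset.notMem_erase _ _) (by exact_mod_cast h)
  have hpI : ∀ i, Prime (l i : ℤ) := fun i => Nat.prime_iff_prime_int.mp (D.hp i)
  -- case i not in T
  have hA : ∀ i, i ∉ T → jacobiSym (s * 2 ^ e * ((∏ i ∈ T, l i : ℕ) : ℤ)) (l i) = 1 := by
    intro i hi
    have hd := not_dvd_unit (D.hp i) (odd_l D i) hs e (not_dvd_prod D i T hi)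
    generalize (s * 2 ^ e * ((∏ i ∈ T, l i : ℕ) : ℤ)) = d at h hd
    have hm' := hmi i
    have nd := ndm i
    generalize (∏ j ∈ Finset.univ.erase i, l j) = m' at hm' nd
    have hpp := hpI i
    rw [hm'] at h
    push_cast at h
    apply jac_core (D.hp i) (A := a) (z := z) _ _ hd
    · exact ⟨m' * b ^ 2, by linear_combination h⟩
    · intro hzz
      have ha : (l i : ℤ) ∣ a := by
        apply hpp.dvd_of_dvd_pow (n := 2)
        have : a ^ 2 = l i * (m' * b ^ 2) + z * (d * z) := by linear_combination h
        rw [this]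
        exact dvd_add (dvd_mul_right _ _) (dvd_mul_of_dvd_left hzz _)
      refine hprim _ (D.hp i) ha ?_ hzz
      obtain ⟨a', rfl⟩ := ha
      obtain ⟨z', rfl⟩ := hzz
      have h2 : m' * b ^ 2 = (l i : ℤ) * (a' ^ 2 - d * z' ^ 2) := by
        apply mul_left_cancel₀ hpp.ne_zero
        linear_combination -h
      rcases hpp.dvd_or_dvd ⟨_, h2⟩ with h3 | h3
      · exact absurd h3 nd
      · exact hpp.dvd_of_dvd_pow h3
  have hB : ∀ i, i ∈ T → jacobiSym (-((∏ j ∈ Finset.univ.erase i, l j : ℕ) : ℤ) *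
      (s * 2 ^ e * ((∏ i ∈ T.erase i, l i : ℕ) : ℤ))) (l i) = 1 := by
    intro i hi
    have hd := not_dvd_unit (D.hp i) (odd_l D i) hs e
      (not_dvd_prod D i (T.erase i) (Finset.notMem_erase _ _))
    rw [← Finset.mul_prod_erase _ _ hi] at h
    have hdd : s * 2 ^ e * ((l i * (∏ j ∈ T.erase i, l j) : ℕ) : ℤ) =
      l i * (s * 2 ^ e * ((∏ i ∈ T.erase i, l i : ℕ) : ℤ)) := by push_cast; ring
    rw [hdd] at h
    generalize (s * 2 ^ e * ((∏ i ∈ T.erase i, l i : ℕ) : ℤ)) = d at h hd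
    have hm' := hmi i
    have nd := ndm i
    generalize (∏ j ∈ Finset.univ.erase i, l j) = m' at hm' nd
    have hpp := hpI i
    rw [hm'] at h
    push_cast at h
    have ha : (l i : ℤ) ∣ a := by
      apply hpp.dvd_of_dvd_pow (n := 2)
      exact ⟨m' * b ^ 2 + d * z ^ 2, by linear_combination h⟩
    obtain ⟨a', rfl⟩ := ha
    have h2 : (l i : ℤ) * a' ^ 2 - m' * b ^ 2 = d * z ^ 2 := by
      apply mul_left_cancel₀ hpp.ne_zero
      linear_combination h
    apply jac_core (D.hp i) (A := m' * b) (z := z)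
    · exact ⟨m' * a' ^ 2, by linear_combination -m' * h2⟩
    · intro hzz
      refine hprim _ (D.hp i) (dvd_mul_right _ _) ?_ hzz
      obtain ⟨z', rfl⟩ := hzz
      have h2 : m' * b ^ 2 = (l i : ℤ) * (a' ^ 2 - l i * d * z' ^ 2) := by
        linear_combination -h2
      rcases hpp.dvd_or_dvd ⟨_, h2⟩ with h3 | h3
      · exact absurd h3 nd
      · exact hpp.dvd_of_dvd_pow h3
    · intro h4
      rcases hpp.dvd_or_dvd h4 with h4 | h4
      · exact nd ((dvd_neg).mp h4)
      · exact hd h4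
  have hA' : ∀ i, i ≠ i0 → i ∉ T → (-1 : ℤ) ^ (e + T.card) = 1 := by
    intro i hi hiT
    have := hA i hiT
    rwa [jacobiSym.mul_left, jacobiSym.mul_left, jacobiSym.pow_left, jac_s D i hi hs,
      jac_two D i hi, jac_T D i hi T hT hiT, one_mul, ← pow_add] at this
  have hB' : ∀ i, i ≠ i0 → i ∈ T →
      jacobiSym (l i0) (l i) * (-1 : ℤ) ^ (e + (T.card - 1)) = 1 := by
    intro i hi hiT
    have := hB i hiT
    rw [← Finset.mul_prod_erase (Finset.univ.erase i) _
      (Finset.mem_erase.mpr ⟨hi.symm, Finset.mem_univ i0⟩), neg_eq_neg_one_mul, Nat.cast_mul,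
      jacobiSym.mul_left, jacobiSym.mul_left, jacobiSym.mul_left, jac_s D i hi (Or.inr rfl),
      jacobiSym.mul_left,
      jacobiSym.mul_left, jacobiSym.pow_left, jac_s D i hi hs,
      jac_two D i hi, jac_T D i hi ((Finset.univ.erase i).erase i0) (by simp) (by simp),
      jac_T D i hi (T.erase i) (by simp [hT]) (by simp), Finset.card_erase_of_mem hiT,
      Finset.card_erase_of_mem (by simp [hi.symm]), Finset.card_erase_of_mem (by simp)] at this
    have hn : Even ((Finset.univ : Finset (Fin n)).card - 1 - 1) := by
      have := D.even
      have := D.two_le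
      simp only [Finset.card_univ, Fintype.card_fin]
      grind
    rw [hn.neg_one_pow, one_mul, one_mul, mul_one, ← pow_add] at this
    exact this
  have ev : Even (e + T.card) := by
    by_cases h1 : i1 ∈ T
    · have := hB' i1 D.ne h1
      rw [D.h01, ← pow_succ'] at this
      have hc : 1 ≤ T.card := Finset.card_pos.mpr ⟨_, h1⟩
      have := (neg_one_pow_eq_one_iff_even (by norm_num : (-1 : ℤ) ≠ 1)).mp this
      rwa [show e + (T.card - 1) + 1 = e + T.card by omega] at this
    · exact (neg_one_pow_eq_one_iff_even (by norm_num : (-1 : ℤ) ≠ 1)).mp (hA' i1 D.ne h1)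
  have hsub : T ⊆ {i1} := by
    intro i hi
    by_contra hne
    rw [Finset.mem_singleton] at hne
    have hi0 : i ≠ i0 := fun h => hT (h ▸ hi)
    have := hB' i hi0 hi
    rw [D.h0j i hi0 hne, one_mul] at this
    have hc : 1 ≤ T.card := Finset.card_pos.mpr ⟨_, hi⟩
    have := (neg_one_pow_eq_one_iff_even (by norm_num : (-1 : ℤ) ≠ 1)).mp this
    grind
  rcases Finset.subset_singleton_iff.mp hsub with rfl | rfl
  · left
    have he0 : e = 0 := by
      rw [Finset.card_empty] at ev
      grind
    subst he0
    refine ⟨rfl, rfl, ?_⟩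
    rcases hs with rfl | rfl
    · rfl
    · exfalso
      have := hA i0 hT
      have h3 := D.h0
      simp only [pow_zero, mul_one, Finset.prod_empty, Nat.cast_one] at this
      rw [jacobiSym.at_neg_one (Nat.odd_iff.mpr (odd_l D i0)),
        ZMod.χ₄_nat_three_mod_four (by omega)] at this
      norm_num at this
  · right
    refine ⟨rfl, ?_⟩
    rw [Finset.card_singleton] at ev
    grind

end DengLi

open NumberField

namespace DengLi
variable {n : ℕ} {l : Fin n → ℕ} {i0 i1 : Fin n} {m : ℕ}

lemma m_mod (D : Data n l i0 i1 m) : m % 4 = 3 := by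
  rw [D.hm, ← Finset.mul_prod_erase _ _ (Finset.mem_univ i0), Nat.mul_mod]
  have h1 : (∏ x ∈ Finset.univ.erase i0, l x) % 4 = 1 := by
    apply Finset.prod_induction l (fun x => x % 4 = 1)
    · intro a b ha hb
      simp [Nat.mul_mod, ha, hb]
    · rfl
    · intro x hx
      have := D.hi x (Finset.ne_of_mem_erase hx)
      omega
  have := D.h0
  rw [h1]; omega

lemma not_sq (D : Data n l i0 i1 m) (c : ℤ) : (m : ℤ) ≠ c ^ 2 := by
  have := m_mod D
  intro h
  have h4 : (c ^ 2) % 4 = 3 := by omega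
  have : c % 4 = 0 ∨ c % 4 = 1 ∨ c % 4 = 2 ∨ c % 4 = 3 := by omega
  rcases this with h | h | h | h <;> simp [pow_two, Int.mul_emod, h] at h4

lemma indep_int (D : Data n l i0 i1 m) {a b : ℤ} (h : a ^ 2 = m * b ^ 2) : a = 0 ∧ b = 0 := by
  have hb : b = 0 := by
    by_contra hb
    have h1 : b ^ 2 ∣ a ^ 2 := ⟨m, by linarith⟩
    obtain ⟨c, rfl⟩ := (Int.pow_dvd_pow_iff two_ne_zero).mp h1
    apply not_sq D c
    apply mul_left_cancel₀ (pow_ne_zero 2 hb)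
    linear_combination -h
  subst hb
  simpa using h

section ring
variable {K : Type} [Field K] [NumberField K] {α : 𝓞 K}

/-- The ring of integers is `ℤ[√m]` with the Deng–Li `m`. -/
structure RData (n : ℕ) (l : Fin n → ℕ) (i0 i1 : Fin n) (m : ℕ) (K : Type) [Field K]
    [NumberField K] (α : 𝓞 K) : Prop extends Data n l i0 i1 m where
  sq : α ^ 2 = (m : 𝓞 K)
  adj : Algebra.adjoin ℤ {α} = ⊤

lemma rep (E : RData n l i0 i1 m K α) (x : 𝓞 K) : ∃ a b : ℤ, x = a + b * α := by
  have hx : x ∈ Algebra.adjoin ℤ {α} := by rw [E.adj]; trivial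
  induction hx using Algebra.adjoin_induction with
  | mem x hx => exact ⟨0, 1, by simpa using hx⟩
  | algebraMap r => exact ⟨r, 0, by simp⟩
  | add x y _ _ hx hy =>
    obtain ⟨a, b, rfl⟩ := hx
    obtain ⟨c, d, rfl⟩ := hy
    exact ⟨a + c, b + d, by push_cast; ring⟩
  | mul x y _ _ hx hy =>
    obtain ⟨a, b, rfl⟩ := hx
    obtain ⟨c, d, rfl⟩ := hy
    refine ⟨a * c + m * (b * d), a * d + b * c, ?_⟩
    have := E.sq
    push_cast
    linear_combination (b * d : 𝓞 K) * this

lemma ind (E : RData n l i0 i1 m K α) {a b : ℤ} (h : (a : 𝓞 K) + b * α = 0) :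
    a = 0 ∧ b = 0 := by
  apply indep_int E.toData
  have h1 : ((a ^ 2 : ℤ) : 𝓞 K) = ((m * b ^ 2 : ℤ) : 𝓞 K) := by
    push_cast
    linear_combination (a - b * α : 𝓞 K) * h + b ^ 2 * E.sq
  exact_mod_cast h1

lemma ext' (E : RData n l i0 i1 m K α) {a b c d : ℤ}
    (h : (a : 𝓞 K) + b * α = c + d * α) : a = c ∧ b = d := by
  have := ind E (a := a - c) (b := b - d) (by push_cast; linear_combination h)
  omega

lemma dvd_iff' (E : RData n l i0 i1 m K α) {p a b : ℤ} :
    (p : 𝓞 K) ∣ a + b * α ↔ p ∣ a ∧ p ∣ b := by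
  constructor
  · rintro ⟨x, hx⟩
    obtain ⟨c, d, rfl⟩ := rep E x
    have := ext' E (a := a) (b := b) (c := p * c) (d := p * d)
      (by push_cast; linear_combination hx)
    exact ⟨⟨c, this.1⟩, ⟨d, this.2⟩⟩
  · rintro ⟨⟨c, rfl⟩, ⟨d, rfl⟩⟩
    exact ⟨c + d * α, by push_cast; ring⟩

/-- The integral basis `1, α`. -/
noncomputable def bas (E : RData n l i0 i1 m K α) : Module.Basis (Fin 2) ℤ (𝓞 K) :=
  Module.Basis.mk (v := ![1, α])
    (by
      rw [LinearIndependent.pair_iff]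
      intro s t h
      exact ind E (by simpa [zsmul_eq_mul] using h))
    (by
      intro x _
      obtain ⟨a, b, rfl⟩ := rep E x
      rw [Matrix.range_cons, Matrix.range_cons, Matrix.range_empty, Set.union_empty,
        Set.singleton_union, Submodule.mem_span_pair]
      exact ⟨a, b, by simp [zsmul_eq_mul]⟩)

lemma norm_eq (E : RData n l i0 i1 m K α) (a b : ℤ) :
    Algebra.norm ℤ ((a : 𝓞 K) + b * α) = a ^ 2 - m * b ^ 2 := by
  have h0 : (bas E) 0 = 1 := by simp [bas]
  have h1 : (bas E) 1 = α := by simp [bas]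
  have key : ∀ c d : ℤ, ∀ i, (bas E).repr ((c : 𝓞 K) + d * α) i = ![c, d] i := by
    intro c d i
    have : (c : 𝓞 K) + d * α = c • (bas E) 0 + d • (bas E) 1 := by
      rw [h0, h1]; simp [zsmul_eq_mul]
    rw [this, map_add, map_smul, map_smul, Module.Basis.repr_self, Module.Basis.repr_self]
    fin_cases i <;> simp
  rw [Algebra.norm_eq_matrix_det (bas E), Matrix.det_fin_two]
  simp only [Algebra.leftMulMatrix_eq_repr_mul, h0, h1]
  have e1 : ((a : 𝓞 K) + b * α) * α = ((m * b : ℤ) : 𝓞 K) + a * α := by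
    push_cast
    linear_combination (b : 𝓞 K) * E.sq
  rw [mul_one, e1]
  simp only [key]
  simp
  ring

lemma absNorm_int (E : RData n l i0 i1 m K α) (p : ℕ) :
    Ideal.absNorm (Ideal.span {(p : 𝓞 K)}) = p ^ 2 := by
  rw [Ideal.absNorm_span_singleton]
  have := norm_eq E p 0
  simp only [Int.cast_natCast, Int.cast_zero, zero_mul, add_zero] at this
  rw [this]
  simp [Int.natAbs_pow]

lemma sq_inj {I J : Ideal (𝓞 K)} (h : I ^ 2 = J ^ 2) : I = J := by
  exact pow_left_injective two_ne_zero h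

/-- Ramified ideals over the odd primes. -/
noncomputable def L (l : Fin n → ℕ) (α : 𝓞 K) (i : Fin n) : Ideal (𝓞 K) :=
  Ideal.span {(l i : 𝓞 K), α}

/-- Ramified ideal over two. -/
noncomputable def P (α : 𝓞 K) : Ideal (𝓞 K) := Ideal.span {(2 : 𝓞 K), 1 + α}

lemma span_pair_sq (x y : 𝓞 K) : (Ideal.span {x, y}) ^ 2 = Ideal.span {x * x, x * y, y * y} := by
  rw [pow_two, Ideal.span_pair_mul_span_pair]
  congr 1
  ext t
  simp only [Set.mem_insert_iff, Set.mem_singleton_iff, mul_comm y x]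
  tauto

lemma L_sq (E : RData n l i0 i1 m K α) (i : Fin n) :
    L l α i ^ 2 = Ideal.span {(l i : 𝓞 K)} := by
  have hmi : m = l i * ∏ j ∈ Finset.univ.erase i, l j := by
    rw [E.hm, Finset.mul_prod_erase _ _ (Finset.mem_univ i)]
  have hc : IsCoprime (l i : ℤ) ((∏ j ∈ Finset.univ.erase i, l j : ℕ) : ℤ) := by
    rw [Nat.isCoprime_iff_coprime]
    exact (Nat.Prime.coprime_iff_not_dvd (E.hp i)).mpr
      (not_dvd_prod E.toData i _ (Finset.notMem_erase _ _))
  generalize (∏ j ∈ Finset.univ.erase i, l j) = m' at hmi hc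
  obtain ⟨u, v, huv⟩ := hc
  have huv' : (u : 𝓞 K) * l i + v * m' = 1 := by exact_mod_cast congrArg (Int.cast : ℤ → 𝓞 K) huv
  have hsq := E.sq
  rw [hmi] at hsq
  push_cast at hsq
  rw [L, span_pair_sq]
  apply le_antisymm
  · rw [Ideal.span_le]
    rintro x hx
    simp only [Set.mem_insert_iff, Set.mem_singleton_iff] at hx
    simp only [SetLike.mem_coe, Ideal.mem_span_singleton]
    rcases hx with rfl | rfl | rfl
    · exact dvd_mul_right _ _
    · exact dvd_mul_right _ _
    · exact ⟨m', by rw [← hsq]; ring⟩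
  · rw [Ideal.span_singleton_le_iff_mem]
    have : u * (l i * l i) + v * (α * α) = (l i : 𝓞 K) := by
      linear_combination ((l i : 𝓞 K)) * huv' + v * hsq
    suffices h3 : u * (l i * l i) + v * (α * α) ∈
        Ideal.span {(l i : 𝓞 K) * l i, (l i : 𝓞 K) * α, α * α} by rwa [this] at h3
    apply Ideal.add_mem
    · exact Ideal.mul_mem_left _ _ (Ideal.subset_span (by simp))
    · exact Ideal.mul_mem_left _ _ (Ideal.subset_span (by simp))

lemma P_sq (E : RData n l i0 i1 m K α) : P α ^ 2 = Ideal.span {(2 : 𝓞 K)} := by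
  have h4 := m_mod E.toData
  obtain ⟨q, hq⟩ : ∃ q, m = 4 * q + 3 := ⟨m / 4, by omega⟩
  have hsq := E.sq
  rw [hq] at hsq
  push_cast at hsq
  rw [P, span_pair_sq]
  apply le_antisymm
  · rw [Ideal.span_le]
    rintro x hx
    simp only [Set.mem_insert_iff, Set.mem_singleton_iff] at hx
    simp only [SetLike.mem_coe, Ideal.mem_span_singleton]
    rcases hx with rfl | rfl | rfl
    · exact dvd_mul_right _ _
    · exact dvd_mul_right _ _
    · exact ⟨2 * q + 2 + α, by linear_combination hsq⟩
  · rw [Ideal.span_singleton_le_iff_mem]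
    have : (-q : 𝓞 K) * (2 * 2) + (-1) * (2 * (1 + α)) + (1 + α) * (1 + α) = (2 : 𝓞 K) := by
      linear_combination hsq
    suffices h3 : (-q : 𝓞 K) * (2 * 2) + (-1) * (2 * (1 + α)) + (1 + α) * (1 + α) ∈
        Ideal.span {(2 : 𝓞 K) * 2, 2 * (1 + α), (1 + α) * (1 + α)} by rwa [this] at h3
    apply Ideal.add_mem
    apply Ideal.add_mem
    · exact Ideal.mul_mem_left _ _ (Ideal.subset_span (by simp))
    · exact Ideal.mul_mem_left _ _ (Ideal.subset_span (by simp))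
    · exact (Ideal.subset_span (by simp))

lemma two_m_split (D : Data n l i0 i1 m) {s : ℕ} (hs : s ∣ 2 * m) (hs' : Squarefree s) :
    ∃ e ≤ 1, ∃ T : Finset (Fin n), s = 2 ^ e * ∏ i ∈ T, l i := by
  classical
  have key : ∀ (U : Finset (Fin n)) (s : ℕ), s ∣ ∏ i ∈ U, l i →
      ∃ T : Finset (Fin n), T ⊆ U ∧ s = ∏ i ∈ T, l i := by
    intro U
    induction U using Finset.induction_on with
    | empty => intro s hs; exact ⟨∅, by simp, by simpa using hs⟩
    | insert a U ha ih =>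
      intro s hs
      rw [Finset.prod_insert ha] at hs
      obtain ⟨x, y, hx, hy, rfl⟩ := (Nat.dvd_mul).mp hs
      obtain ⟨T, hT, rfl⟩ := ih y hy
      rcases (Nat.dvd_prime (D.hp a)).mp hx with rfl | rfl
      · exact ⟨T, hT.trans (Finset.subset_insert _ _), by simp⟩
      · exact ⟨insert a T, Finset.insert_subset_insert _ hT,
          by rw [Finset.prod_insert (fun h => ha (hT h))]⟩
  obtain ⟨x, y, hx, hy, rfl⟩ := (Nat.dvd_mul).mp hs
  rw [D.hm] at hy
  obtain ⟨T, -, rfl⟩ := key _ y hy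
  rcases (Nat.dvd_prime Nat.prime_two).mp hx with rfl | rfl
  · exact ⟨0, by simp, T, by simp⟩
  · exact ⟨1, by simp, T, by simp⟩

lemma dvd_sq_imp (E : RData n l i0 i1 m K α) {p : ℕ} (hp : p.Prime) (h2m : ¬ p ∣ 2 * m)
    {J : Ideal (𝓞 K)} (h : Ideal.span {(p : 𝓞 K)} ∣ J ^ 2) : Ideal.span {(p : 𝓞 K)} ∣ J := by
  rw [Ideal.dvd_iff_le] at h ⊢
  intro x hx
  have hx2 := h (Ideal.pow_mem_pow hx 2)
  rw [Ideal.mem_span_singleton] at hx2 ⊢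
  obtain ⟨a, b, rfl⟩ := rep E x
  have e : ((a : 𝓞 K) + b * α) ^ 2 = ((a ^ 2 + m * b ^ 2 : ℤ) : 𝓞 K) + ((2 * a * b : ℤ) : 𝓞 K) * α := by
    push_cast
    linear_combination (b ^ 2 : 𝓞 K) * E.sq
  have hpI : Prime (p : ℤ) := Nat.prime_iff_prime_int.mp hp
  have hcast : (p : 𝓞 K) = ((p : ℤ) : 𝓞 K) := by simp
  rw [hcast, e, dvd_iff' E] at hx2
  rw [hcast, dvd_iff' E]
  obtain ⟨h1, h2⟩ := hx2
  have n2 : ¬ (p : ℤ) ∣ 2 := fun h => h2m (Dvd.dvd.mul_right (by exact_mod_cast h) _)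
  have nm : ¬ (p : ℤ) ∣ m := fun h => h2m (Dvd.dvd.mul_left (by exact_mod_cast h) _)
  rcases hpI.dvd_or_dvd h2 with h2 | hb
  · have ha : (p : ℤ) ∣ a := (hpI.dvd_or_dvd h2).resolve_left n2
    refine ⟨ha, ?_⟩
    have h3 := (dvd_add_right (dvd_pow ha two_ne_zero)).mp h1
    exact hpI.dvd_of_dvd_pow ((hpI.dvd_or_dvd h3).resolve_left nm)
  · refine ⟨?_, hb⟩
    have h3 := (dvd_add_left (Dvd.dvd.mul_left (dvd_pow hb two_ne_zero) (m : ℤ))).mp h1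
    exact hpI.dvd_of_dvd_pow h3

/-- An ideal whose square is generated by a positive integer is a product of ramified ideals,
up to an integer factor. -/
lemma structure_lemma (E : RData n l i0 i1 m K α) {J : Ideal (𝓞 K)} {t : ℕ} (ht : t ≠ 0)
    (h : J ^ 2 = Ideal.span {(t : 𝓞 K)}) :
    ∃ (k e : ℕ) (T : Finset (Fin n)), k ≠ 0 ∧ e ≤ 1 ∧ t = k ^ 2 * (2 ^ e * ∏ i ∈ T, l i) ∧
      J = Ideal.span {(k : 𝓞 K)} * (P α ^ e * ∏ i ∈ T, L l α i) := by
  obtain ⟨s, k, hsk, hsf⟩ := Nat.sq_mul_squarefree t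
  have hk : k ≠ 0 := by rintro rfl; simp at hsk; exact ht hsk.symm
  have hk' : Ideal.span {(k : 𝓞 K)} ≠ 0 := by simpa using hk
  have h1 : Ideal.span {(k : 𝓞 K)} ^ 2 * Ideal.span {(s : 𝓞 K)} = J ^ 2 := by
    rw [h, ← hsk, Ideal.span_singleton_pow, Ideal.span_singleton_mul_span_singleton]
    push_cast; rfl
  obtain ⟨J', rfl⟩ : Ideal.span {(k : 𝓞 K)} ∣ J :=
    (UniqueFactorizationMonoid.pow_dvd_pow_iff_dvd two_ne_zero).mp ⟨_, h1.symm⟩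
  rw [mul_pow] at h1
  have h2 : J' ^ 2 = Ideal.span {(s : 𝓞 K)} := (mul_left_cancel₀ (pow_ne_zero 2 hk') h1).symm
  have hs0 : s ≠ 0 := hsf.ne_zero
  have hs2m : s ∣ 2 * m := by
    rw [← Nat.prod_primeFactors_of_squarefree hsf]
    apply Finset.prod_primes_dvd
    · intro p hp
      exact (Nat.prime_of_mem_primeFactors hp).prime
    · intro p hp
      by_contra hnd
      have hpp := Nat.prime_of_mem_primeFactors hp
      obtain ⟨r, rfl⟩ := Nat.dvd_of_mem_primeFactors hp
      have h3 : Ideal.span {(p : 𝓞 K)} ∣ J' ^ 2 := by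
        rw [h2, Nat.cast_mul, ← Ideal.span_singleton_mul_span_singleton]
        exact dvd_mul_right _ _
      have h4 := pow_dvd_pow_of_dvd (dvd_sq_imp E hpp hnd h3) 2
      rw [h2, Ideal.span_singleton_pow, Ideal.dvd_span_singleton, Ideal.mem_span_singleton] at h4
      have h5 := (dvd_iff' E (p := (p : ℤ) ^ 2) (a := p * r) (b := 0)).mp (by
        push_cast at h4 ⊢; simpa using h4)
      have h6 : p ^ 2 ∣ p * r := by exact_mod_cast h5.1
      have := hsf p (by rwa [← pow_two])
      exact hpp.prime.not_isUnit this
  obtain ⟨e, he, T, rfl⟩ := two_m_split E.toData hs2m hsf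
  refine ⟨k, e, T, hk, he, hsk.symm, ?_⟩
  congr 1
  apply sq_inj
  rw [h2, mul_pow, ← pow_mul, mul_comm e 2, pow_mul, P_sq E, ← Finset.prod_pow,
    Finset.prod_congr rfl (fun i _ => L_sq E i), Ideal.prod_span_singleton,
    Ideal.span_singleton_pow, Ideal.span_singleton_mul_span_singleton]
  push_cast; rfl

end ring
end DengLi

open NumberField

namespace DengLi
variable {n : ℕ} {l : Fin n → ℕ} {i0 i1 : Fin n} {m : ℕ}
section cls
variable {K : Type} [Field K] [NumberField K] {α : 𝓞 K}
open nonZeroDivisors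

lemma L_ne (E : RData n l i0 i1 m K α) (i : Fin n) : L l α i ∈ (Ideal (𝓞 K))⁰ := by
  rw [mem_nonZeroDivisors_iff_ne_zero]
  intro h
  have := L_sq E i
  rw [h, zero_pow two_ne_zero, eq_comm] at this
  simp [(E.hp i).ne_zero] at this

lemma P_ne (E : RData n l i0 i1 m K α) : P α ∈ (Ideal (𝓞 K))⁰ := by
  rw [mem_nonZeroDivisors_iff_ne_zero]
  intro h
  have := P_sq E
  rw [h, zero_pow two_ne_zero, eq_comm] at this
  simp at this

/-- `L` as a nonzero ideal. -/
noncomputable def L0 (E : RData n l i0 i1 m K α) (i : Fin n) : (Ideal (𝓞 K))⁰ := ⟨_, L_ne E i⟩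

/-- `P` as a nonzero ideal. -/
noncomputable def P0 (E : RData n l i0 i1 m K α) : (Ideal (𝓞 K))⁰ := ⟨_, P_ne E⟩

/-- class of `L` -/
noncomputable def c (E : RData n l i0 i1 m K α) (i : Fin n) : ClassGroup (𝓞 K) :=
  ClassGroup.mk0 (L0 E i)

/-- class of `P` -/
noncomputable def cP (E : RData n l i0 i1 m K α) : ClassGroup (𝓞 K) :=
  ClassGroup.mk0 (P0 E)

lemma mk0_eq_one (I : (Ideal (𝓞 K))⁰) :
    ClassGroup.mk0 I = 1 ↔ ∃ x, (I : Ideal (𝓞 K)) = Ideal.span {x} := by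
  obtain ⟨I, hI⟩ := I
  rw [ClassGroup.mk0_eq_one_iff hI, Submodule.isPrincipal_iff]

lemma c_sq (E : RData n l i0 i1 m K α) (i : Fin n) : c E i ^ 2 = 1 := by
  rw [c, ← map_pow, mk0_eq_one]
  exact ⟨_, L_sq E i⟩

lemma cP_sq (E : RData n l i0 i1 m K α) : cP E ^ 2 = 1 := by
  rw [cP, ← map_pow, mk0_eq_one]
  exact ⟨_, P_sq E⟩

lemma absNorm_L (E : RData n l i0 i1 m K α) (i : Fin n) : Ideal.absNorm (L l α i) = l i := by
  have := congrArg Ideal.absNorm (L_sq E i)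
  rw [map_pow, absNorm_int E] at this
  exact Nat.pow_left_injective two_ne_zero this

lemma absNorm_P (E : RData n l i0 i1 m K α) : Ideal.absNorm (P α) = 2 := by
  have := congrArg Ideal.absNorm (P_sq E)
  have h2 := absNorm_int E 2
  rw [Nat.cast_two] at h2
  rw [map_pow, h2] at this
  exact Nat.pow_left_injective two_ne_zero this

lemma coe_prod (E : RData n l i0 i1 m K α) (I : (Ideal (𝓞 K))⁰) (e : ℕ) (T : Finset (Fin n)) :
    ((I * (P0 E ^ e * ∏ i ∈ T, L0 E i) : (Ideal (𝓞 K))⁰) : Ideal (𝓞 K)) =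
      I * (P α ^ e * ∏ i ∈ T, L l α i) := by
  simp [P0, L0]

lemma sign_of_natAbs {x : ℤ} {y : ℕ} (h : x.natAbs = y) :
    ∃ s : ℤ, (s = 1 ∨ s = -1) ∧ x = s * y := by
  rcases Int.natAbs_eq x with h1 | h1
  · exact ⟨1, Or.inl rfl, by rw [h1, h]; simp⟩
  · exact ⟨-1, Or.inr rfl, by rw [h1, h]; simp⟩

lemma prin_norm (E : RData n l i0 i1 m K α) (I : (Ideal (𝓞 K))⁰) (e : ℕ) (he : e ≤ 1)
    (T : Finset (Fin n)) (hT : i0 ∉ T)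
    (h : ClassGroup.mk0 I ^ 2 * (cP E ^ e * ∏ i ∈ T, c E i) = 1) :
    (T = ∅ ∧ e = 0) ∨ (T = {i1} ∧ e = 1) := by
  unfold c cP at h
  rw [← map_prod, ← map_pow, ← map_pow, ← map_mul, ← map_mul, mk0_eq_one, coe_prod] at h
  obtain ⟨x, hx⟩ := h
  obtain ⟨a, b, rfl⟩ := rep E x
  have h1 := congrArg Ideal.absNorm hx
  rw [Ideal.absNorm_span_singleton, norm_eq E, map_mul, map_mul, map_pow, absNorm_P E, map_prod,
    Finset.prod_congr rfl (fun i _ => absNorm_L E i)] at h1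
  obtain ⟨s, hs, h2⟩ := sign_of_natAbs h1.symm
  have hz : ((Ideal.absNorm (I : Ideal (𝓞 K)) : ℕ) : ℤ) ≠ 0 := by
    have := nonZeroDivisors.ne_zero I.2
    simpa [Ideal.absNorm_eq_zero_iff] using this
  have := norm_lemma E.toData T hT e he s hs a b (Ideal.absNorm (I : Ideal (𝓞 K)) : ℕ) hz (by
    rw [h2]; push_cast [SubmonoidClass.coe_pow, map_pow]; ring)
  tauto

lemma rel_all (E : RData n l i0 i1 m K α) : ∏ i, c E i = 1 := by
  unfold c
  rw [← map_prod, mk0_eq_one]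
  refine ⟨α, ?_⟩
  apply sq_inj
  have hL : ∀ i, (L0 E i : Ideal (𝓞 K)) ^ 2 = Ideal.span {(l i : 𝓞 K)} := L_sq E
  rw [Submonoid.coe_finsetProd, ← Finset.prod_pow, Finset.prod_congr rfl (fun i _ => hL i),
    Ideal.prod_span_singleton, Ideal.span_singleton_pow, E.sq, E.hm]
  push_cast; rfl

lemma rel_compl (E : RData n l i0 i1 m K α) (T : Finset (Fin n)) :
    ∏ i ∈ Tᶜ, c E i = ∏ i ∈ T, c E i := by
  have h1 := Finset.prod_mul_prod_compl T (c E)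
  rw [rel_all] at h1
  have h2 : (∏ i ∈ T, c E i) ^ 2 = 1 := by
    rw [← Finset.prod_pow, Finset.prod_congr rfl (fun i _ => c_sq E i), Finset.prod_const_one]
  rw [pow_two] at h2
  exact mul_left_cancel (h1.trans h2.symm)

lemma cls_of_eq (E : RData n l i0 i1 m K α) (J : (Ideal (𝓞 K))⁰) {k e : ℕ} (hk : k ≠ 0)
    {T : Finset (Fin n)}
    (h : (J : Ideal (𝓞 K)) = Ideal.span {(k : 𝓞 K)} * (P α ^ e * ∏ i ∈ T, L l α i)) :
    ClassGroup.mk0 J = cP E ^ e * ∏ i ∈ T, c E i := by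
  have hk' : Ideal.span {(k : 𝓞 K)} ∈ (Ideal (𝓞 K))⁰ := by
    rw [mem_nonZeroDivisors_iff_ne_zero]; simpa using hk
  have : J = ⟨_, hk'⟩ * (P0 E ^ e * ∏ i ∈ T, L0 E i) := by
    apply Subtype.ext
    rw [coe_prod, h]
  rw [this, map_mul, (mk0_eq_one _).mpr ⟨_, rfl⟩, one_mul, map_mul, map_pow, map_prod]
  rfl

lemma sq_free_l (D : Data n l i0 i1 m) : Squarefree m := by
  rw [D.hm]
  apply Finset.squarefree_prod_of_pairwise_isCoprime
  · intro i _ j _ hij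
    exact Nat.coprime_iff_isRelPrime.mp ((Nat.coprime_primes (D.hp i) (D.hp j)).mpr (fun h => hij (D.inj h)))
  · intro i _
    exact (D.hp i).prime.squarefree

lemma sq_dvd_lemma {m a y : ℤ} (hm : Squarefree m) (h : a ^ 2 ∣ m * y ^ 2) (ha : a ≠ 0) :
    a ∣ y := by
  have hg : 0 < Int.gcd a y := Int.gcd_pos_of_ne_zero_left _ ha
  obtain ⟨u, v, hg', hc, hu, hv⟩ : ∃ u v : ℤ, 0 < Int.gcd a y ∧ IsCoprime u v ∧
      a = u * (Int.gcd a y : ℤ) ∧ y = v * (Int.gcd a y : ℤ) := by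
    obtain ⟨u, v, h1, h2, h3⟩ := Int.exists_gcd_one hg
    exact ⟨u, v, hg, Int.isCoprime_iff_gcd_eq_one.mpr h1, h2, h3⟩
  generalize (Int.gcd a y : ℤ) = g at *
  subst hu hv
  have hg0 : g ≠ 0 := by rintro rfl; simp at ha
  have h1 : u ^ 2 ∣ m * v ^ 2 := by
    apply Int.dvd_of_mul_dvd_mul_left (a := g ^ 2) (by positivity)
    convert h using 1 <;> ring
  have h2 : u ^ 2 ∣ m := (hc.pow (m := 2) (n := 2)).dvd_of_dvd_mul_right h1
  have h3 : IsUnit u := hm u (by rwa [← pow_two])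
  exact mul_dvd_mul (h3.dvd) (dvd_refl g)

lemma pell_no (D : Data n l i0 i1 m) (w k : ℤ) : w ^ 2 - m * k ^ 2 ≠ -1 := by
  intro h
  have := norm_lemma D ∅ (by simp) 0 (by simp) (-1) (Or.inr rfl) w k 1 one_ne_zero
    (by rw [h]; simp)
  simp at this

lemma cP_eq (E : RData n l i0 i1 m K α) : cP E = c E i1 := by
  suffices h : cP E * c E i1 = 1 by
    have h2 := c_sq E i1
    rw [pow_two] at h2
    exact mul_right_cancel (h.trans h2.symm)
  have hm4 := m_mod E.toData
  have hmpos : (0 : ℤ) < m := by omega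
  have hns : ¬ IsSquare (m : ℤ) := by
    rintro ⟨r, hr⟩
    exact not_sq E.toData r (by rw [hr]; ring)
  obtain ⟨f, hf⟩ := Pell.IsFundamental.exists_of_not_isSquare hmpos hns
  obtain ⟨hx, hy, hmin⟩ := hf
  have hprop := f.prop
  have hmin' : ∀ x y : ℤ, x ^ 2 - m * y ^ 2 = 1 → 1 < x → f.x ≤ x := by
    intro x y h1 h2
    exact hmin (b := Pell.Solution₁.mk x y h1) (by simpa using h2)
  generalize f.x = x at *
  generalize f.y = y at *
  obtain ⟨t, ht⟩ : ∃ t : ℕ, (t : ℤ) = 2 * (x + 1) := ⟨(2 * (x + 1)).toNat, by omega⟩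
  have ht0 : t ≠ 0 := by rintro rfl; simp at ht; omega
  have htR : (t : 𝓞 K) = 2 * (x + 1) := by exact_mod_cast congrArg (Int.cast : ℤ → 𝓞 K) ht
  have hpR : (x : 𝓞 K) ^ 2 - m * y ^ 2 = 1 := by
    exact_mod_cast congrArg (Int.cast : ℤ → 𝓞 K) hprop
  have hunit : IsUnit ((x : 𝓞 K) + y * α) := by
    apply IsUnit.of_mul_eq_one ((x : 𝓞 K) - y * α)
    linear_combination hpR - (y : 𝓞 K) ^ 2 * E.sq
  have hb : (1 + ((x : 𝓞 K) + y * α)) ^ 2 = ((x : 𝓞 K) + y * α) * t := by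
    rw [htR]
    linear_combination -hpR + (y : 𝓞 K) ^ 2 * E.sq
  have hJ : (Ideal.span {1 + ((x : 𝓞 K) + y * α)}) ^ 2 = Ideal.span {(t : 𝓞 K)} := by
    rw [Ideal.span_singleton_pow, hb, Ideal.span_singleton_mul_left_unit hunit]
  obtain ⟨k, e, T, hk, he, hkt, hJ2⟩ := structure_lemma E ht0 hJ
  have hJ0 : Ideal.span {1 + ((x : 𝓞 K) + y * α)} ∈ (Ideal (𝓞 K))⁰ := by
    rw [mem_nonZeroDivisors_iff_ne_zero]
    intro h
    rw [h, zero_pow two_ne_zero, eq_comm] at hJ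
    simp [ht0] at hJ
  have hcl := cls_of_eq E ⟨_, hJ0⟩ hk hJ2
  rw [(mk0_eq_one _).mpr ⟨_, rfl⟩] at hcl
  have hkt' : 2 * (x + 1) = (k : ℤ) ^ 2 * (2 ^ e * ((∏ i ∈ T, l i : ℕ) : ℤ)) := by
    rw [← ht, hkt]; push_cast; ring
  by_cases h0 : i0 ∈ T
  · rw [← rel_compl] at hcl
    rcases prin_norm E 1 e he Tᶜ (by simpa using h0)
      (by rw [← hcl, map_one, one_pow, one_mul]) with ⟨hT, rfl⟩ | ⟨hT, rfl⟩
    · exfalso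
      rw [Finset.compl_eq_empty_iff] at hT
      subst hT
      rw [← E.hm] at hkt'
      have hk2 : Even (k : ℤ) := by
        by_contra hodd
        rw [Int.not_even_iff_odd] at hodd
        have h1 : Odd ((k : ℤ) ^ 2 * (2 ^ 0 * (m : ℤ))) := by
          rw [pow_zero, one_mul]
          exact (hodd.pow).mul (by rw [Int.odd_iff]; omega)
        rw [← hkt'] at h1
        rw [Int.odd_iff] at h1; omega
      obtain ⟨q, hq⟩ := hk2
      have hq0 : q ≠ 0 := by rintro rfl; simp at hq; omega
      rw [hq] at hkt'
      have hx1 : x = 2 * m * q ^ 2 - 1 := by linarith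
      have h4 : y ^ 2 = (2 * q) ^ 2 * (m * q ^ 2 - 1) := by
        apply mul_left_cancel₀ hmpos.ne'
        rw [hx1] at hprop
        linear_combination -hprop
      obtain ⟨w, rfl⟩ := (Int.pow_dvd_pow_iff two_ne_zero).mp (Dvd.intro _ h4.symm)
      apply pell_no E.toData w q
      apply mul_left_cancel₀ (pow_ne_zero 2 (mul_ne_zero two_ne_zero hq0))
      linear_combination h4
    · rw [hT, Finset.prod_singleton, pow_one] at hcl
      exact hcl.symm
  · rcases prin_norm E 1 e he T h0
      (by rw [← hcl, map_one, one_pow, one_mul]) with ⟨hT, rfl⟩ | ⟨hT, rfl⟩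
    · exfalso
      subst hT
      simp only [pow_zero, Finset.prod_empty, Nat.cast_one, mul_one] at hkt'
      have hk2 : Even (k : ℤ) := by
        have : Even ((k : ℤ) ^ 2) := ⟨x + 1, by linarith⟩
        exact (Int.even_pow.mp this).1
      obtain ⟨q, hq⟩ := hk2
      have hq0 : 0 < q := by omega
      rw [hq] at hkt'
      have hx1 : x = 2 * q ^ 2 - 1 := by linarith
      have h4 : m * y ^ 2 = (2 * q) ^ 2 * (q ^ 2 - 1) := by
        rw [hx1] at hprop
        linear_combination -hprop
      have hsf : Squarefree (m : ℤ) := Int.squarefree_natCast.mpr (sq_free_l E.toData)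
      have hdv : (2 * q) ^ 2 ∣ m * y ^ 2 := Dvd.intro _ h4.symm
      have hdv2 : 2 * q ∣ y := sq_dvd_lemma hsf hdv (by omega)
      obtain ⟨w, rfl⟩ := hdv2
      have h5 : q ^ 2 - m * w ^ 2 = 1 := by
        apply mul_left_cancel₀ (pow_ne_zero 2 (mul_ne_zero two_ne_zero hq0.ne'))
        linear_combination -h4
      have hq1 : 1 < q := by
        by_contra hle
        have : q = 1 := by omega
        subst this
        omega
      have := hmin' q w h5 hq1
      nlinarith
    · rw [hT, Finset.prod_singleton, pow_one] at hcl
      exact hcl.symm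

lemma two_tors (E : RData n l i0 i1 m K α) (x : ClassGroup (𝓞 K)) (hx : x ^ 2 = 1) :
    ∃ (e : ℕ) (T : Finset (Fin n)), x = cP E ^ e * ∏ i ∈ T, c E i := by
  obtain ⟨I, rfl⟩ := ClassGroup.mk0_surjective x
  have hx' := hx
  rw [← map_pow, mk0_eq_one] at hx
  obtain ⟨g, hg⟩ := hx
  rw [SubmonoidClass.coe_pow] at hg
  obtain ⟨a, b, rfl⟩ := rep E g
  have h1 := congrArg Ideal.absNorm hg
  rw [Ideal.absNorm_span_singleton, norm_eq E, map_pow] at h1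
  have hz : Ideal.absNorm (I : Ideal (𝓞 K)) ≠ 0 := by
    have := nonZeroDivisors.ne_zero I.2
    simpa [Ideal.absNorm_eq_zero_iff] using this
  generalize Ideal.absNorm (I : Ideal (𝓞 K)) = N at *
  obtain ⟨s, hs, h2⟩ := sign_of_natAbs h1.symm
  have hs1 : s = 1 := by
    have := norm_lemma E.toData ∅ (by simp) 0 (by simp) s hs a b N (by exact_mod_cast hz) (by
      rw [h2]; simp)
    simpa using this
  subst hs1
  rw [one_mul] at h2
  push_cast at h2
  have hnR : (a : 𝓞 K) ^ 2 - m * b ^ 2 = N ^ 2 := by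
    exact_mod_cast congrArg (Int.cast : ℤ → 𝓞 K) h2
  by_cases ht0 : 2 * (a + N) = 0
  · have ha : a = -N := by omega
    subst ha
    have hb : b = 0 := by
      have hm4 := m_mod E.toData
      have : (m : ℤ) * b ^ 2 = 0 := by linarith
      rcases mul_eq_zero.mp this with h | h
      · omega
      · exact pow_eq_zero_iff two_ne_zero |>.mp h
    subst hb
    have hI : (I : Ideal (𝓞 K)) ^ 2 = Ideal.span {(N : 𝓞 K)} := by
      rw [hg]; simp [Ideal.span_singleton_neg]
    obtain ⟨k, e, T, hk, he, hkt, hJ2⟩ := structure_lemma E hz hI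
    exact ⟨e, T, cls_of_eq E I hk hJ2⟩
  · have hb : ((a : 𝓞 K) + b * α + N) ^ 2 = (a + b * α) * ((2 * (a + N) : ℤ) : 𝓞 K) := by
      push_cast
      linear_combination -hnR + (b : 𝓞 K) ^ 2 * E.sq
    have habs : Ideal.span {((2 * (a + N) : ℤ) : 𝓞 K)} =
        Ideal.span {(((2 * (a + N)).natAbs : ℕ) : 𝓞 K)} := by
      rcases Int.natAbs_eq (2 * (a + N)) with h | h
      · conv_lhs => rw [h]
        simp
      · conv_lhs => rw [h]
        simp [Ideal.span_singleton_neg]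
    have hsq : (Ideal.span {(a : 𝓞 K) + b * α + N}) ^ 2 = (I : Ideal (𝓞 K)) ^ 2 *
        Ideal.span {(((2 * (a + N)).natAbs : ℕ) : 𝓞 K)} := by
      rw [Ideal.span_singleton_pow, hb, hg, ← habs, Ideal.span_singleton_mul_span_singleton]
    obtain ⟨J, hJ⟩ : (I : Ideal (𝓞 K)) ∣ Ideal.span {(a : 𝓞 K) + b * α + N} :=
      (UniqueFactorizationMonoid.pow_dvd_pow_iff_dvd two_ne_zero).mp ⟨_, hsq⟩
    rw [hJ, mul_pow] at hsq
    have hI0 := nonZeroDivisors.ne_zero I.2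
    have hJ2 := mul_left_cancel₀ (pow_ne_zero 2 hI0) hsq
    have ht0' : (2 * (a + N)).natAbs ≠ 0 := by simpa using ht0
    obtain ⟨k, e, T, hk, he, hkt, hJ3⟩ := structure_lemma E ht0' hJ2
    have hJ0 : J ∈ (Ideal (𝓞 K))⁰ := by
      rw [mem_nonZeroDivisors_iff_ne_zero]
      rintro rfl
      rw [zero_pow two_ne_zero, eq_comm] at hJ2
      simp at hJ2
      apply ht0
      linarith
    refine ⟨e, T, ?_⟩
    rw [← cls_of_eq E ⟨J, hJ0⟩ hk hJ3]
    have hp : ClassGroup.mk0 I * ClassGroup.mk0 ⟨J, hJ0⟩ = 1 := by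
      rw [← map_mul, mk0_eq_one]
      exact ⟨_, hJ.symm⟩
    rw [pow_two] at hx'
    exact mul_left_cancel (hx'.trans hp.symm)

end cls
end DengLi

open NumberField

namespace DengLi
variable {n : ℕ} {l : Fin n → ℕ} {i0 i1 : Fin n} {m : ℕ}
section fin
variable {K : Type} [Field K] [NumberField K] {α : 𝓞 K}

/-- The homomorphism from an elementary abelian group attached to involutions. -/
def Psi {ι G : Type*} [Fintype ι] [CommGroup G] (c : ι → G) (hc : ∀ i, c i ^ 2 = 1) :
    (ι → Multiplicative (ZMod 2)) →* G where
  toFun x := ∏ i, if x i = 1 then 1 else c i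
  map_one' := by simp
  map_mul' x y := by
    rw [← Finset.prod_mul_distrib]
    apply Finset.prod_congr rfl
    intro i _
    have key : ∀ a b : Multiplicative (ZMod 2), (if a * b = 1 then (1 : G) else c i) =
        (if a = 1 then 1 else c i) * (if b = 1 then 1 else c i) := by
      intro a b
      have hcc : c i * c i = 1 := by rw [← pow_two, hc]
      have h : ∀ a : Multiplicative (ZMod 2), a = 1 ∨ a = Multiplicative.ofAdd 1 := by decide
      have h1 : (Multiplicative.ofAdd (1 : ZMod 2)) ≠ 1 := by decide
      have h2 : (Multiplicative.ofAdd (1 : ZMod 2)) * (Multiplicative.ofAdd (1 : ZMod 2)) = 1 := by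
        decide
      rcases h a with rfl | rfl <;> rcases h b with rfl | rfl <;> simp [h1, h2, hcc]
    exact key (x i) (y i)

lemma Psi_eq {ι κ G : Type*} [Fintype ι] [CommGroup G] (c : κ → G)
    (f : ι ↪ κ) (hc : ∀ i, c (f i) ^ 2 = 1) (x : ι → Multiplicative (ZMod 2)) :
    Psi (fun i => c (f i)) hc x =
      ∏ k ∈ (Finset.univ.filter (fun i => x i ≠ 1)).map f, c k := by
  rw [Finset.prod_map, Finset.prod_filter]
  simp only [Psi, MonoidHom.coe_mk, OneHom.coe_mk, ne_eq, ite_not]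

lemma c_mem_range {ι G : Type*} [Fintype ι] [DecidableEq ι] [CommGroup G] (c : ι → G)
    (hc : ∀ i, c i ^ 2 = 1) (i : ι) : c i ∈ (Psi c hc).range := by
  refine ⟨fun j => if j = i then Multiplicative.ofAdd 1 else 1, ?_⟩
  simp only [Psi, MonoidHom.coe_mk, OneHom.coe_mk]
  rw [Finset.prod_eq_single i]
  · have h1 : (Multiplicative.ofAdd (1 : ZMod 2)) ≠ 1 := by decide
    simp [h1]
  · intro j _ hj
    simp [hj]
  · simp

theorem main (E : RData n l i0 i1 m K α) {k : ℕ} (f : Fin k ↪ Fin n)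
    (hf : ∀ i, i ≠ i0 ↔ ∃ j, f j = i) (S : Sylow 2 (ClassGroup (𝓞 K))) :
    Nonempty ((S : Subgroup (ClassGroup (𝓞 K))) ≃* (Fin k → Multiplicative (ZMod 2))) := by
  have hT : ∀ x : Fin k → Multiplicative (ZMod 2),
      i0 ∉ (Finset.univ.filter (fun i => x i ≠ 1)).map f := by
    intro x h
    obtain ⟨j, -, hj⟩ := Finset.mem_map.mp h
    exact (hf i0).mpr ⟨j, hj⟩ rfl
  have key : ∀ (y : ClassGroup (𝓞 K)) (x : Fin k → Multiplicative (ZMod 2)),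
      y ^ 2 * Psi (fun i => c E (f i)) (fun i => c_sq E (f i)) x = 1 → x = 1 := by
    intro y x h
    obtain ⟨I, rfl⟩ := ClassGroup.mk0_surjective y
    rw [Psi_eq (c E) f] at h
    rcases prin_norm E I 0 (by simp) _ (hT x) (by rw [pow_zero, one_mul]; exact h) with h1 | h1
    · have h2 := h1.1
      rw [Finset.map_eq_empty, Finset.filter_eq_empty_iff] at h2
      funext i
      simpa using h2 (Finset.mem_univ i)
    · exact absurd h1.2 (by simp)
  have hinj : Function.Injective (Psi (fun i => c E (f i)) (fun i => c_sq E (f i))) := by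
    rw [injective_iff_map_eq_one]
    intro x hx
    exact key 1 x (by rw [hx]; simp)
  have hrange : ∀ y : ClassGroup (𝓞 K), y ^ 2 = 1 →
      y ∈ (Psi (fun i => c E (f i)) (fun i => c_sq E (f i))).range := by
    intro y hy
    have hc : ∀ i, i ≠ i0 → c E i ∈ (Psi (fun i => c E (f i)) (fun i => c_sq E (f i))).range := by
      intro i hi
      obtain ⟨j, rfl⟩ := (hf i).mp hi
      exact c_mem_range (fun i => c E (f i)) _ j
    have hc' : ∀ i, c E i ∈ (Psi (fun i => c E (f i)) (fun i => c_sq E (f i))).range := by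
      intro i
      by_cases hi : i = i0
      · subst hi
        have := rel_compl E {i}
        rw [Finset.prod_singleton] at this
        rw [← this]
        exact Subgroup.prod_mem _ (fun j hj => hc j (by simpa using hj))
      · exact hc i hi
    obtain ⟨e, T, rfl⟩ := two_tors E y hy
    apply Subgroup.mul_mem
    · rw [cP_eq]
      exact Subgroup.pow_mem _ (hc' _) _
    · exact Subgroup.prod_mem _ (fun j _ => hc' j)
  have h4 : ∀ y : ClassGroup (𝓞 K), (y ^ 2) ^ 2 = 1 → y ^ 2 = 1 := by
    intro y hy
    obtain ⟨x, hx⟩ := hrange _ hy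
    have := key y x (by rw [hx, ← pow_two, hy])
    rw [← hx, this, map_one]
  have h2k : ∀ (r : ℕ) (y : ClassGroup (𝓞 K)), y ^ 2 ^ r = 1 → y ^ 2 = 1 := by
    intro r
    induction r with
    | zero => intro y hy; simp at hy; simp [hy]
    | succ r ih =>
      intro y hy
      rw [pow_succ', pow_mul] at hy
      exact h4 y (ih _ hy)
  have hPG : IsPGroup 2 (Psi (fun i => c E (f i)) (fun i => c_sq E (f i))).range := by
    rintro ⟨_, x, rfl⟩
    refine ⟨1, ?_⟩
    apply Subtype.ext
    have hxx : x ^ 2 = 1 := by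
      funext i
      have : ∀ a : Multiplicative (ZMod 2), a ^ 2 = 1 := by decide
      exact this (x i)
    rw [pow_one, Subgroup.coe_pow, ← map_pow, hxx, map_one, Subgroup.coe_one]
  have hS : (S : Subgroup (ClassGroup (𝓞 K))) =
      (Psi (fun i => c E (f i)) (fun i => c_sq E (f i))).range := by
    symm
    apply S.is_maximal' hPG
    intro y hy
    obtain ⟨r, hr⟩ := S.isPGroup' ⟨y, hy⟩
    apply hrange
    apply h2k r
    simpa using congrArg Subtype.val hr
  exact ⟨(MulEquiv.subgroupCongr hS).trans (MonoidHom.ofInjective hinj).symm⟩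

end fin
end DengLi


/-- **Deng–Li family: structure of the 2-class group.** For the real quadratic field
`K = ℚ(√m)`, `m = ℓ₁⋯ℓ_n` the Deng–Li product of primes, the 2-Sylow subgroup of the
ideal class group of `K` is isomorphic to `(ℤ/2ℤ)^(n−1)`. -/
theorem dengLi_two_class_group
    (n : ℕ) (hn : 2 ≤ n) (hneven : Even n)
    (l : Fin n → ℕ) (hlp : ∀ i, (l i).Prime) (hlinj : Function.Injective l)
    (hl1 : l ⟨0, by omega⟩ % 8 = 3)
    (hli : ∀ i : Fin n, i ≠ ⟨0, by omega⟩ → l i % 8 = 5)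
    (hleg12 : jacobiSym (l ⟨0, by omega⟩ : ℤ) (l ⟨1, by omega⟩) = -1)
    (hleg1j : ∀ j : Fin n, 2 ≤ (j : ℕ) → jacobiSym (l ⟨0, by omega⟩ : ℤ) (l j) = 1)
    (hlegij : ∀ i j : Fin n, 1 ≤ (i : ℕ) → i < j → jacobiSym (l i : ℤ) (l j) = -1)
    (m : ℕ) (hm : m = ∏ i, l i)
    (K : Type) [Field K] [NumberField K] (hdeg : Module.finrank ℚ K = 2)
    (α : 𝓞 K) (hα : α ^ 2 = (m : 𝓞 K)) (hgen : Algebra.adjoin ℤ {α} = ⊤) :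
    ∀ S : Sylow 2 (ClassGroup (𝓞 K)),
      Nonempty ((S : Subgroup (ClassGroup (𝓞 K))) ≃*
        (Fin (n - 1) → Multiplicative (ZMod 2))) := by
  have E : DengLi.RData n l ⟨0, by omega⟩ ⟨1, by omega⟩ m K α :=
    { even := hneven
      two_le := hn
      hp := hlp
      inj := hlinj
      ne := by simp
      h0 := hl1
      hi := hli
      h01 := hleg12
      h0j := by
        intro j h0 h1
        apply hleg1j
        rw [ne_eq, Fin.ext_iff] at h0 h1
        simp only at h0 h1
        omega
      hij := by
        intro i j hi hj hij
        have hi' : 1 ≤ (i : ℕ) := by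
          rw [ne_eq, Fin.ext_iff] at hi
          simp only at hi
          omega
        have hj' : 1 ≤ (j : ℕ) := by
          rw [ne_eq, Fin.ext_iff] at hj
          simp only at hj
          omega
        rcases lt_or_gt_of_ne hij with h | h
        · exact hlegij i j hi' h
        · rw [jacobiSym.quadratic_reciprocity_one_mod_four]
          · exact hlegij j i hj' h
          · have := hli i hi
            omega
          · have := hli j hj
            rw [Nat.odd_iff]
            omega
      hm := hm
      sq := hα
      adj := hgen }
  intro S
  refine DengLi.main E ⟨fun j : Fin (n - 1) => (⟨j + 1, by omega⟩ : Fin n), ?_⟩ ?_ S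
  · intro a b h
    simpa [Fin.ext_iff] using h
  · intro i
    constructor
    · intro hi
      rw [ne_eq, Fin.ext_iff] at hi
      simp only at hi
      refine ⟨⟨i - 1, by omega⟩, ?_⟩
      apply Fin.ext
      change (i : ℕ) - 1 + 1 = i
      omega
    · rintro ⟨j, rfl⟩
      simp [Fin.ext_iff]
end

section
/- For e ∈ {0, 1} and a subset I ⊆ {1, …, n}, the ideal 𝔭^e · ∏_{i ∈ I} 𝔩_i of ℤ[√m] is principal if and only if (e, I) is one of the four pairs (0, ∅), (0, {1, …, n}), (1, {2}), (1, {1, …, n} ∖ {2}). In particular 𝔭·𝔩₂ is principal, ∏_{i=1}^{n} 𝔩_i = (√m) is principal, and there are exactly two independent relations of principality among the classes of the ramified primes. -/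
open NumberField

namespace DengLi

def PEq {n : ℕ} (l : Fin n → ℕ) (e : ℕ) (I : Finset (Fin n)) : Prop :=
  ∃ x y s : ℤ, (s = 1 ∨ s = -1) ∧
    (∏ i ∈ I, (l i : ℤ)) * x ^ 2 - (∏ i ∈ Iᶜ, (l i : ℤ)) * y ^ 2 = s * 2 ^ e

lemma PEq.compl {n : ℕ} {l : Fin n → ℕ} {e : ℕ} {I : Finset (Fin n)} (h : PEq l e I) :
    PEq l e Iᶜ := by
  obtain ⟨x, y, s, hs, h⟩ := h
  refine ⟨y, x, -s, by omega, ?_⟩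
  rw [compl_compl]; linarith

lemma jac_prod_s7 {n : ℕ} (l : Fin n → ℕ) (S : Finset (Fin n)) (b : ℕ) :
    jacobiSym (∏ i ∈ S, (l i : ℤ)) b = ∏ i ∈ S, jacobiSym (l i : ℤ) b := by
  induction S using Finset.induction_on with
  | empty => simp
  | insert a s ha ih => rw [Finset.prod_insert ha, Finset.prod_insert ha, jacobiSym.mul_left, ih]

lemma jac_key {p : ℕ} (hp5 : p % 8 = 5) {A y t s : ℤ} {e : ℕ}
    (hs : s = 1 ∨ s = -1) (h : A * y ^ 2 - s * 2 ^ e = p * t) :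
    jacobiSym A p = (-1) ^ e := by
  have hodd : Odd p := Nat.odd_iff.2 (by omega)
  have h2 : jacobiSym 2 p = -1 := by
    rw [jacobiSym.at_two hodd, ZMod.χ₈_nat_eq_if_mod_eight]
    rw [if_neg (by omega), if_neg (by omega)]
  have hm1 : jacobiSym (-1) p = 1 := by
    rw [jacobiSym.at_neg_one hodd, ZMod.χ₄_nat_one_mod_four (by omega)]
  have hs1 : jacobiSym s p = 1 := by
    rcases hs with rfl | rfl
    · exact jacobiSym.one_left p
    · exact hm1
  have hc : jacobiSym (A * y ^ 2) p = jacobiSym (s * 2 ^ e) p := by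
    apply jacobiSym.mod_left'
    apply Int.emod_emod_of_dvd _ (dvd_refl _) |>.symm.trans
    rw [show A * y ^ 2 = s * 2 ^ e + p * t by linarith]
    simp
  rw [jacobiSym.mul_left, jacobiSym.mul_left, jacobiSym.pow_left, jacobiSym.pow_left, hs1, h2,
    one_mul] at hc
  rcases jacobiSym.trichotomy y p with h | h | h <;> rw [h] at hc
  · simp at hc
    exact absurd hc.symm (pow_ne_zero _ (by norm_num))
  · simpa using hc
  · simpa using hc

lemma elim {n : ℕ} (z w : Fin n) (hz : (z : ℕ) = 0) (hw : (w : ℕ) = 1)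
    (hneven : Even n)
    (l : Fin n → ℕ)
    (hli : ∀ i : Fin n, i ≠ z → l i % 8 = 5)
    (hleg12 : jacobiSym (l z : ℤ) (l w) = -1)
    (hleg1j : ∀ j : Fin n, 2 ≤ (j : ℕ) → jacobiSym (l z : ℤ) (l j) = 1)
    (hlegij : ∀ i j : Fin n, 1 ≤ (i : ℕ) → i < j → jacobiSym (l i : ℤ) (l j) = -1)
    (e : ℕ) (he : e ≤ 1) (I : Finset (Fin n)) (h0 : z ∉ I)
    (h : PEq l e I) : (e = 0 ∧ I = ∅) ∨ (e = 1 ∧ I = {w}) := by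
  have hn : 2 ≤ n := by have := w.isLt; omega
  have hsym : ∀ i j : Fin n, i ≠ z → j ≠ z → i ≠ j → jacobiSym (l i : ℤ) (l j) = -1 := by
    intro i j hi hj hij
    have hi1 : 1 ≤ (i : ℕ) := by
      by_contra hc; exact hi (Fin.ext (by omega))
    have hj1 : 1 ≤ (j : ℕ) := by
      by_contra hc; exact hj (Fin.ext (by omega))
    rcases lt_or_gt_of_ne hij with hlt | hlt
    · exact hlegij i j hi1 hlt
    · have := hli i hi
      have := hli j hj
      rw [jacobiSym.quadratic_reciprocity_one_mod_four (by omega) (Nat.odd_iff.2 (by omega))]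
      exact hlegij j i hj1 hlt
  have hS : ∀ (S : Finset (Fin n)) (j : Fin n), z ∉ S → j ≠ z → j ∉ S →
      jacobiSym (∏ i ∈ S, (l i : ℤ)) (l j) = (-1) ^ S.card := by
    intro S j hzS hj hjS
    rw [jac_prod_s7, Finset.prod_congr rfl (g := fun _ => (-1 : ℤ)), Finset.prod_const]
    intro i hi
    exact hsym i j (fun h => hzS (h ▸ hi)) hj (fun h => hjS (h ▸ hi))
  obtain ⟨x, y, s, hs, h⟩ := h
  have hA : ∀ j, j ≠ z → j ∉ I → (-1 : ℤ) ^ I.card = (-1) ^ e := by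
    intro j hj hjI
    rw [← hS I j h0 hj hjI]
    obtain ⟨t, ht⟩ := Finset.dvd_prod_of_mem (fun i => (l i : ℤ)) (Finset.mem_compl.2 hjI)
    refine jac_key (hli j hj) (y := x) (t := t * y ^ 2) hs ?_
    rw [← h, ht]; ring
  have hzc : z ∈ Iᶜ := Finset.mem_compl.2 h0
  have hcard : (Iᶜ.erase z).card = n - 1 - I.card := by
    rw [Finset.card_erase_of_mem hzc, Finset.card_compl, Fintype.card_fin]; omega
  have hkn : I.card < n := by
    have : I.card + Iᶜ.card = n := by rw [Finset.card_add_card_compl, Fintype.card_fin]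
    have : 0 < Iᶜ.card := Finset.card_pos.2 ⟨z, hzc⟩
    omega
  have hB : ∀ j, j ∈ I → jacobiSym (l z : ℤ) (l j) * (-1) ^ (n - 1 - I.card) = (-1) ^ e := by
    intro j hjI
    have hj : j ≠ z := fun h => h0 (h ▸ hjI)
    rw [← hcard, ← hS (Iᶜ.erase z) j (by simp) hj (by simp [hjI]), ← jacobiSym.mul_left,
      Finset.mul_prod_erase _ (fun i => (l i : ℤ)) hzc]
    obtain ⟨t, ht⟩ := Finset.dvd_prod_of_mem (fun i => (l i : ℤ)) hjI
    refine jac_key (hli j hj) (y := y) (t := t * x ^ 2) (s := -s) (by omega) ?_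
    rw [neg_mul, ← h, ht]; ring
  have hwz : w ≠ z := fun h => by rw [h] at hw; omega
  have h2 : ∀ j, j ≠ z → j ≠ w → jacobiSym (l z : ℤ) (l j) = 1 := by
    intro j hj hj'
    apply hleg1j
    have a : (j : ℕ) ≠ 0 := fun h => hj (Fin.ext (h.trans hz.symm))
    have b : (j : ℕ) ≠ 1 := fun h => hj' (Fin.ext (h.trans hw.symm))
    omega
  by_cases hwI : w ∈ I
  · have hBw := hB w hwI
    rw [hleg12] at hBw
    have honly : I = {w} := by
      ext j
      constructor
      · intro hj
        by_contra hne
        simp at hne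
        have := hB j hj
        rw [h2 j (fun h => h0 (h ▸ hj)) hne] at this
        have h3 : ((-1:ℤ)) ^ (n - 1 - I.card) ≠ 0 := pow_ne_zero _ (by norm_num)
        omega
      · intro hj
        simp at hj
        rwa [hj]
    right
    refine ⟨?_, honly⟩
    rw [honly, Finset.card_singleton] at hBw
    have : Even (n - 1 - 1) := by
      obtain ⟨k, hk⟩ := hneven
      exact ⟨k - 1, by omega⟩
    rw [this.neg_one_pow] at hBw
    rcases (by omega : e = 0 ∨ e = 1) with rfl | rfl
    · norm_num at hBw
    · rfl
  · have hAw := hA w hwz hwI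
    rcases I.eq_empty_or_nonempty with rfl | ⟨j, hj⟩
    · left
      refine ⟨?_, rfl⟩
      rcases (by omega : e = 0 ∨ e = 1) with rfl | rfl
      · rfl
      · norm_num at hAw
    · exfalso
      have := hB j hj
      rw [h2 j (fun h => h0 (h ▸ hj)) (fun h => hwI (h ▸ hj)), one_mul, ← hAw] at this
      have h5 : ((-1:ℤ)) ^ (n - 1) = 1 := by
        have : n - 1 = (n - 1 - I.card) + I.card := by omega
        rw [this, pow_add]
        rw [‹(-1:ℤ) ^ (n - 1 - I.card) = _›, ← pow_add, Even.neg_one_pow ⟨_, rfl⟩]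
      have : Odd (n - 1) := by
        obtain ⟨k, hk⟩ := hneven
        exact ⟨k - 1, by omega⟩
      rw [this.neg_one_pow] at h5
      norm_num at h5

lemma elim' {n : ℕ} (z w : Fin n) (hz : (z : ℕ) = 0) (hw : (w : ℕ) = 1)
    (hneven : Even n)
    (l : Fin n → ℕ)
    (hli : ∀ i : Fin n, i ≠ z → l i % 8 = 5)
    (hleg12 : jacobiSym (l z : ℤ) (l w) = -1)
    (hleg1j : ∀ j : Fin n, 2 ≤ (j : ℕ) → jacobiSym (l z : ℤ) (l j) = 1)
    (hlegij : ∀ i j : Fin n, 1 ≤ (i : ℕ) → i < j → jacobiSym (l i : ℤ) (l j) = -1)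
    (e : ℕ) (he : e ≤ 1) (I : Finset (Fin n))
    (h : PEq l e I) : (e = 0 ∧ I = ∅) ∨ (e = 0 ∧ I = Finset.univ) ∨
          (e = 1 ∧ I = {w}) ∨
          (e = 1 ∧ I = Finset.univ \ {w}) := by
  by_cases h0 : z ∈ I
  · rcases elim z w hz hw hneven l hli hleg12 hleg1j hlegij e he Iᶜ (by simpa using h0) h.compl with h | h
    · right; left
      exact ⟨h.1, by simpa using h.2⟩
    · right; right; right
      refine ⟨h.1, ?_⟩
      rw [← Finset.compl_eq_univ_sdiff, ← h.2, compl_compl]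
  · rcases elim z w hz hw hneven l hli hleg12 hleg1j hlegij e he I h0 h with h | h
    · exact Or.inl h
    · exact Or.inr (Or.inr (Or.inl h))

lemma cop {n : ℕ} (l : Fin n → ℕ) (hlp : ∀ i, (l i).Prime) (hlinj : Function.Injective l)
    (S : Set (Fin n)) : S.Pairwise (Function.onFun IsCoprime (fun i => (l i : ℤ))) := by
  intro i _ j _ hij
  exact Nat.isCoprime_iff_coprime.2 ((Nat.coprime_primes (hlp i) (hlp j)).2 (hlinj.ne hij))

lemma split {n : ℕ} (l : Fin n → ℕ) (hlp : ∀ i, (l i).Prime) (hlinj : Function.Injective l)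
    {A B c : ℤ} (hA : 0 < A) (hB : 0 < B) (hAB : IsCoprime A B)
    (h : A * B = (∏ i, (l i : ℤ)) * c ^ 2) :
    ∃ (I : Finset (Fin n)) (x y : ℤ), A = (∏ i ∈ I, (l i : ℤ)) * x ^ 2 ∧
      B = (∏ i ∈ Iᶜ, (l i : ℤ)) * y ^ 2 := by
  classical
  let I : Finset (Fin n) := Finset.univ.filter (fun i => (l i : ℤ) ∣ A)
  obtain ⟨A', hA'⟩ : (∏ i ∈ I, (l i : ℤ)) ∣ A :=
    Finset.prod_dvd_of_coprime (cop l hlp hlinj _) (fun i hi => (Finset.mem_filter.1 hi).2)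
  obtain ⟨B', hB'⟩ : (∏ i ∈ Iᶜ, (l i : ℤ)) ∣ B := by
    refine Finset.prod_dvd_of_coprime (cop l hlp hlinj _) (fun i hi => ?_)
    have h1 : ¬ (l i : ℤ) ∣ A := by simpa [I] using hi
    have h2 : (l i : ℤ) ∣ A * B := by
      rw [h]
      exact Dvd.dvd.mul_right (Finset.dvd_prod_of_mem (fun i => (l i : ℤ)) (Finset.mem_univ i)) _
    exact ((Nat.prime_iff_prime_int.1 (hlp i)).dvd_or_dvd h2).resolve_left h1
  have hpos : ∀ S : Finset (Fin n), 0 < ∏ i ∈ S, (l i : ℤ) := fun S =>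
    Finset.prod_pos (fun i _ => by exact_mod_cast (hlp i).pos)
  have hA0 : 0 < A' := by
    have := hpos I
    rw [hA'] at hA; exact pos_of_mul_pos_right hA this.le
  have hB0 : 0 < B' := by
    have := hpos Iᶜ
    rw [hB'] at hB; exact pos_of_mul_pos_right hB this.le
  have hc : IsCoprime A' B' :=
    (hAB.of_isCoprime_of_dvd_left (Dvd.intro_left _ hA'.symm)).of_isCoprime_of_dvd_right
      (Dvd.intro_left _ hB'.symm)
  have hsq : A' * B' = c ^ 2 := by
    have h3 := Finset.prod_mul_prod_compl I (fun i => (l i : ℤ))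
    have : (∏ i, (l i : ℤ)) * (A' * B') = (∏ i, (l i : ℤ)) * c ^ 2 := by
      rw [← h, ← h3]
      conv_rhs => rw [hA', hB']
      ring
    exact mul_left_cancel₀ (hpos _).ne' this
  obtain ⟨x, hx⟩ := Int.sq_of_isCoprime hc hsq
  obtain ⟨y, hy⟩ := Int.sq_of_isCoprime hc.symm (by rw [mul_comm]; exact hsq)
  have hx' : A' = x ^ 2 := hx.resolve_right (by nlinarith [sq_nonneg x])
  have hy' : B' = y ^ 2 := hy.resolve_right (by nlinarith [sq_nonneg y])
  exact ⟨I, x, y, by rw [hA', ← hx'], by rw [hB', ← hy']⟩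

lemma not_sq_s7 {n : ℕ} (z : Fin n) (l : Fin n → ℕ) (hlp : ∀ i, (l i).Prime)
    (hlinj : Function.Injective l) : ¬ IsSquare (∏ i, (l i : ℤ)) := by
  have hsf : Squarefree (∏ i, (l i : ℤ)) := by
    apply Finset.squarefree_prod_of_pairwise_isCoprime
    · intro i hi j hj hij
      exact (cop l hlp hlinj Set.univ (Set.mem_univ i) (Set.mem_univ j) hij).isRelPrime
    · intro i _
      exact (Nat.prime_iff_prime_int.1 (hlp i)).squarefree
  rintro ⟨r, hr⟩
  have hu : IsUnit r := hsf r (by rw [hr])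
  have hd : (l z : ℤ) ∣ ∏ i, (l i : ℤ) :=
    Finset.dvd_prod_of_mem (fun i => (l i : ℤ)) (Finset.mem_univ _)
  rw [hr] at hd
  exact (Nat.prime_iff_prime_int.1 (hlp z)).not_isUnit (isUnit_of_dvd_unit hd (hu.mul hu))

lemma exists_rel {n : ℕ} (z w : Fin n) (hz : (z : ℕ) = 0) (hw : (w : ℕ) = 1)
    (hneven : Even n)
    (l : Fin n → ℕ) (hlp : ∀ i, (l i).Prime) (hlinj : Function.Injective l)
    (hl1 : l z % 8 = 3)
    (hli : ∀ i : Fin n, i ≠ z → l i % 8 = 5)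
    (hleg12 : jacobiSym (l z : ℤ) (l w) = -1)
    (hleg1j : ∀ j : Fin n, 2 ≤ (j : ℕ) → jacobiSym (l z : ℤ) (l j) = 1)
    (hlegij : ∀ i j : Fin n, 1 ≤ (i : ℕ) → i < j → jacobiSym (l i : ℤ) (l j) = -1) :
    PEq l 1 {w} := by
  have hM0 : 0 < ∏ i, (l i : ℤ) :=
    Finset.prod_pos (fun i _ => by exact_mod_cast (hlp i).pos)
  obtain ⟨f, hf1, hf2, hf3⟩ := Pell.IsFundamental.exists_of_not_isSquare hM0 (not_sq_s7 z l hlp hlinj)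
  have hprop := f.prop
  generalize f.x = a at *
  generalize f.y = b at *
  set M := ∏ i, (l i : ℤ) with hM
  rcases Int.even_or_odd' a with ⟨k, hk | hk⟩
  · obtain ⟨I, x, y, hx, hy⟩ := split l hlp hlinj (A := a + 1) (B := a - 1) (c := b)
      (by omega) (by omega) ⟨k, -(k + 1), by subst hk; ring⟩ (by linarith)
    have hP : PEq l 1 I := ⟨x, y, 1, Or.inl rfl, by rw [← hx, ← hy]; ring⟩
    rcases elim' z w hz hw hneven l hli hleg12 hleg1j hlegij 1 le_rfl I hP with h | h | h | h
    · omega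
    · omega
    · rwa [h.2] at hP
    · have := hP.compl
      rwa [h.2, ← Finset.compl_eq_univ_sdiff, compl_compl] at this
  · exfalso
    have hbe : Even b := by
      have hMo : ¬ (2 : ℤ) ∣ M := by
        intro hd
        obtain ⟨i, -, hi⟩ := (Prime.dvd_finsetProd_iff Int.prime_two _).1 hd
        have : l i % 8 = 3 ∨ l i % 8 = 5 := by
          by_cases h : i = z
          · left; rw [h]; exact hl1
          · exact Or.inr (hli i h)
        omega
      have h2 : (2 : ℤ) ∣ M * b ^ 2 := by
        subst hk
        exact ⟨2 * k ^ 2 + 2 * k, by linarith⟩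
      exact even_iff_two_dvd.2 (Int.prime_two.dvd_of_dvd_pow
        ((Int.prime_two.dvd_or_dvd h2).resolve_left hMo))
    obtain ⟨c, hc⟩ := hbe
    obtain ⟨I, x, y, hx, hy⟩ := split l hlp hlinj (A := k + 1) (B := k) (c := c)
      (by omega) (by omega) ⟨1, -1, by ring⟩ (by subst hk hc; linarith)
    have hP : PEq l 0 I := ⟨x, y, 1, Or.inl rfl, by rw [← hx, ← hy]; ring⟩
    rcases elim' z w hz hw hneven l hli hleg12 hleg1j hlegij 0 (by norm_num) I hP with h | h | h | h
    · rw [h.2] at hx hy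
      simp only [Finset.prod_empty, one_mul, Finset.compl_empty, ← hM] at hx hy
      have hx2 : 1 < |x| := by
        by_contra hcon
        have : x ^ 2 ≤ 1 := (sq_le_one_iff_abs_le_one x).2 (by omega)
        omega
      have := hf3 (b := Pell.Solution₁.mk |x| y (by rw [sq_abs, ← hx, ← hy]; ring)) (by simpa using hx2)
      simp only [Pell.Solution₁.x_mk] at this
      have h3 := sq_abs x
      nlinarith
    · rw [h.2] at hx hy
      simp only [Finset.prod_empty, one_mul, Finset.compl_univ, ← hM] at hx hy
      obtain ⟨p, hp⟩ : ∃ p, p = l z := ⟨_, rfl⟩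
      have : Fact p.Prime := ⟨hp ▸ hlp _⟩
      refine ZMod.mod_four_ne_three_of_sq_eq_neg_one (p := p) (y := (y : ZMod p)) ?_
        (by omega)
      have hd : (p : ℤ) ∣ M := by
        rw [hp]
        exact Finset.dvd_prod_of_mem (fun i => (l i : ℤ)) (Finset.mem_univ _)
      have hM' : ((M : ℤ) : ZMod p) = 0 := (ZMod.intCast_zmod_eq_zero_iff_dvd _ _).2 hd
      have : y ^ 2 = M * x ^ 2 - 1 := by linarith
      have := congrArg (fun t : ℤ => (t : ZMod p)) this
      push_cast at this
      rw [this, hM']; ring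
    · omega
    · omega

lemma ideal_sq_inj {R : Type*} [CommRing R] [IsDedekindDomain R] {I J : Ideal R}
    (h : I ^ 2 = J ^ 2) : I = J :=
  dvd_antisymm ((UniqueFactorizationMonoid.pow_dvd_pow_iff_dvd two_ne_zero).1 h.dvd)
    ((UniqueFactorizationMonoid.pow_dvd_pow_iff_dvd two_ne_zero).1 h.symm.dvd)

/-- Principality of an ideal with square `(d)` is an equation in `ℤ√M`. -/
lemma bridge {R : Type*} [CommRing R] [IsDedekindDomain R] {M : ℤ}
    (φ : ℤ√M ≃+* R) (d : ℤ) (J : Ideal R) (hJ : J ^ 2 = Ideal.span {(d : R)}) :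
    J.IsPrincipal ↔ ∃ g : ℤ√M, Associated (g ^ 2) (d : ℤ√M) := by
  have key : ∀ g : ℤ√M, Associated (g ^ 2) (d : ℤ√M) ↔ Associated (φ g ^ 2) (d : R) := by
    intro g
    constructor
    · intro h
      have := h.map (φ : ℤ√M →* R)
      simpa using this
    · intro h
      have := h.map (φ.symm : R →* ℤ√M)
      simpa using this
  constructor
  · rintro ⟨γ, hγ⟩
    refine ⟨φ.symm γ, (key _).2 ?_⟩
    rw [RingEquiv.apply_symm_apply, ← Ideal.span_singleton_eq_span_singleton,
      ← Ideal.span_singleton_pow, ← hJ, hγ]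
  · rintro ⟨g, hg⟩
    rw [key, ← Ideal.span_singleton_eq_span_singleton, ← Ideal.span_singleton_pow, ← hJ] at hg
    exact ⟨φ g, (ideal_sq_inj hg).symm⟩

lemma assoc_iff {n : ℕ} (l : Fin n → ℕ) (hlp : ∀ i, (l i).Prime) (hlinj : Function.Injective l)
    (e : ℕ) (he : e ≤ 1) (I : Finset (Fin n)) :
    (∃ g : ℤ√(∏ i, (l i : ℤ)), Associated (g ^ 2)
      ((2 ^ e * ∏ i ∈ I, (l i : ℤ) : ℤ) : ℤ√(∏ i, (l i : ℤ)))) ↔ PEq l e I := by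
  have hpos : ∀ S : Finset (Fin n), 0 < ∏ i ∈ S, (l i : ℤ) := fun S =>
    Finset.prod_pos (fun i _ => by exact_mod_cast (hlp i).pos)
  have h3 := Finset.prod_mul_prod_compl I (fun i => (l i : ℤ))
  have hDpos := hpos I
  set M := ∏ i, (l i : ℤ) with hM
  obtain ⟨D, hD⟩ : ∃ D, D = ∏ i ∈ I, (l i : ℤ) := ⟨_, rfl⟩
  obtain ⟨D', hD'⟩ : ∃ D', D' = ∏ i ∈ Iᶜ, (l i : ℤ) := ⟨_, rfl⟩
  unfold PEq
  simp only [← hD, ← hD'] at h3 hDpos ⊢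
  have h2e : (0 : ℤ) < 2 ^ e := by positivity
  constructor
  · rintro ⟨⟨a, b⟩, u, hu⟩
    have hnu : IsUnit (Zsqrtd.norm (u : ℤ√M)) := (Zsqrtd.isUnit_iff_norm_isUnit _).1 u.isUnit
    have hn := congrArg Zsqrtd.norm hu
    rw [Zsqrtd.norm_mul, Zsqrtd.norm_intCast, sq, Zsqrtd.norm_mul] at hn
    have hnn : Zsqrtd.norm (⟨a, b⟩ : ℤ√M) = a * a - M * b * b := rfl
    rw [hnn] at hn
    have hs : ∃ s : ℤ, (s = 1 ∨ s = -1) ∧ a * a - M * b * b = s * (2 ^ e * D) := by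
      have : (a * a - M * b * b) * (a * a - M * b * b) = (2 ^ e * D) * (2 ^ e * D) := by
        rcases Int.isUnit_iff.1 hnu with h | h <;> rw [h] at hn
        · linarith
        · exfalso
          have : 0 < 2 ^ e * D := by positivity
          nlinarith [mul_self_nonneg (a * a - M * b * b)]
      rcases mul_self_eq_mul_self_iff.1 this with h | h
      · exact ⟨1, Or.inl rfl, by linarith⟩
      · exact ⟨-1, Or.inr rfl, by linarith⟩
    obtain ⟨s, hs, hs'⟩ := hs
    have hda : D ∣ a := by
      rw [hD]
      refine Finset.prod_dvd_of_coprime (cop l hlp hlinj _) (fun i hi => ?_)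
      have h1 : (l i : ℤ) ∣ D := hD ▸ Finset.dvd_prod_of_mem (fun i => (l i : ℤ)) hi
      refine (Nat.prime_iff_prime_int.1 (hlp i)).dvd_of_dvd_pow (n := 2) (h1.trans ?_)
      exact ⟨D' * b * b + s * 2 ^ e, by rw [← h3] at hs'; linarith⟩
    obtain ⟨x, rfl⟩ := hda
    refine ⟨x, b, s, hs, mul_left_cancel₀ hDpos.ne' ?_⟩
    rw [← h3] at hs'
    linarith
  · rintro ⟨x, y, s, hs, h⟩
    obtain ⟨w, hw⟩ : ∃ w : ℤ√M, (⟨D * x, y⟩ : ℤ√M) ^ 2 = ((2 ^ e * D : ℤ) : ℤ√M) * w := by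
      rcases (by omega : e = 0 ∨ e = 1) with rfl | rfl
      · refine ⟨⟨D * x ^ 2 + D' * y ^ 2, 2 * x * y⟩, ?_⟩
        rw [sq, Zsqrtd.ext_iff]
        simp only [Zsqrtd.re_mul, Zsqrtd.im_mul, Zsqrtd.re_intCast, Zsqrtd.im_intCast]
        rw [← h3]
        constructor <;> ring
      · refine ⟨⟨s + D' * y ^ 2, x * y⟩, ?_⟩
        rw [sq, Zsqrtd.ext_iff]
        simp only [Zsqrtd.re_mul, Zsqrtd.im_mul, Zsqrtd.re_intCast, Zsqrtd.im_intCast]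
        rw [← h3]
        constructor
        · linear_combination D * h
        · ring
    have hn := congrArg Zsqrtd.norm hw
    rw [Zsqrtd.norm_mul, Zsqrtd.norm_intCast, sq, Zsqrtd.norm_mul] at hn
    have hnn : Zsqrtd.norm (⟨D * x, y⟩ : ℤ√M) = s * (2 ^ e * D) := by
      have : Zsqrtd.norm (⟨D * x, y⟩ : ℤ√M) = (D * x) * (D * x) - M * y * y := rfl
      rw [this, ← h3]
      linear_combination D * h
    have hss : s * s = 1 := by rcases hs with rfl | rfl <;> norm_num
    have hw1 : Zsqrtd.norm w = 1 := by
      rw [hnn] at hn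
      have h0 : (2 ^ e * D) * (2 ^ e * D) ≠ 0 := by positivity
      apply mul_left_cancel₀ h0
      linear_combination -hn + (2 ^ e * D) * (2 ^ e * D) * hss
    have hwu : IsUnit w := (Zsqrtd.isUnit_iff_norm_isUnit _).2 (by rw [hw1]; exact isUnit_one)
    exact ⟨⟨D * x, y⟩, by rw [hw]; exact associated_mul_unit_left _ _ hwu⟩

end DengLi


/-- **Deng–Li family: principality relations among ramified primes.** For `e ∈ {0,1}` and
`I ⊆ {1,…,n}`, the ideal `𝔭^e·∏_{i∈I} 𝔩_i` is principal exactly for the four pairs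
`(0, ∅)`, `(0, {1,…,n})`, `(1, {2})`, `(1, {1,…,n}∖{2})`; moreover `∏ᵢ 𝔩_i = (√m)`. -/
theorem dengLi_principal_relations
    (n : ℕ) (hn : 2 ≤ n) (hneven : Even n)
    (l : Fin n → ℕ) (hlp : ∀ i, (l i).Prime) (hlinj : Function.Injective l)
    (hl1 : l ⟨0, by omega⟩ % 8 = 3)
    (hli : ∀ i : Fin n, i ≠ ⟨0, by omega⟩ → l i % 8 = 5)
    (hleg12 : jacobiSym (l ⟨0, by omega⟩ : ℤ) (l ⟨1, by omega⟩) = -1)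
    (hleg1j : ∀ j : Fin n, 2 ≤ (j : ℕ) → jacobiSym (l ⟨0, by omega⟩ : ℤ) (l j) = 1)
    (hlegij : ∀ i j : Fin n, 1 ≤ (i : ℕ) → i < j → jacobiSym (l i : ℤ) (l j) = -1)
    (m : ℕ) (hm : m = ∏ i, l i)
    (K : Type) [Field K] [NumberField K] (hdeg : Module.finrank ℚ K = 2)
    (α : 𝓞 K) (hα : α ^ 2 = (m : 𝓞 K)) (hgen : Algebra.adjoin ℤ {α} = ⊤)
    (P : Ideal (𝓞 K)) (hP : P.IsPrime) (hP2 : P ^ 2 = Ideal.span {(2 : 𝓞 K)})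
    (L : Fin n → Ideal (𝓞 K)) (hL : ∀ i, (L i).IsPrime)
    (hL2 : ∀ i, (L i) ^ 2 = Ideal.span {((l i : ℕ) : 𝓞 K)}) :
    (∀ (e : ℕ), e ≤ 1 → ∀ I : Finset (Fin n),
      (P ^ e * ∏ i ∈ I, L i).IsPrincipal ↔
        ((e = 0 ∧ I = ∅) ∨ (e = 0 ∧ I = Finset.univ) ∨
          (e = 1 ∧ I = {(⟨1, by omega⟩ : Fin n)}) ∨
          (e = 1 ∧ I = Finset.univ \ {(⟨1, by omega⟩ : Fin n)}))) ∧
    (∏ i, L i) = Ideal.span {α} := by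
  have hns := DengLi.not_sq_s7 ⟨0, by omega⟩ l hlp hlinj
  have hmM : ((∏ i, (l i : ℤ) : ℤ) : 𝓞 K) = (m : 𝓞 K) := by rw [hm]; push_cast; rfl
  let φ₀ : ℤ√(∏ i, (l i : ℤ)) →+* 𝓞 K := Zsqrtd.lift ⟨α, by rw [← sq, hα, hmM]⟩
  have hφα : φ₀ Zsqrtd.sqrtd = α := by simp [φ₀]
  have hinj : Function.Injective φ₀ :=
    Zsqrtd.lift_injective _ (fun r hr => hns ⟨r, hr⟩)
  have hsurj : Function.Surjective φ₀ := by
    intro x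
    have hx : x ∈ Algebra.adjoin ℤ {α} := hgen ▸ Algebra.mem_top
    have hle : Algebra.adjoin ℤ {α} ≤ φ₀.toIntAlgHom.range := by
      rw [Algebra.adjoin_le_iff, Set.singleton_subset_iff]
      exact ⟨Zsqrtd.sqrtd, hφα⟩
    obtain ⟨y, hy⟩ := hle hx
    exact ⟨y, hy⟩
  let φ := RingEquiv.ofBijective φ₀ ⟨hinj, hsurj⟩
  have hprod : ∀ I : Finset (Fin n),
      (∏ i ∈ I, L i) ^ 2 = Ideal.span {((∏ i ∈ I, (l i : ℤ) : ℤ) : 𝓞 K)} := by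
    intro I
    rw [← Finset.prod_pow, Finset.prod_congr rfl (fun i _ => hL2 i), Ideal.prod_span_singleton]
    push_cast; rfl
  have hJ : ∀ (e : ℕ) (I : Finset (Fin n)), (P ^ e * ∏ i ∈ I, L i) ^ 2 =
      Ideal.span {((2 ^ e * ∏ i ∈ I, (l i : ℤ) : ℤ) : 𝓞 K)} := by
    intro e I
    rw [mul_pow, hprod, ← pow_mul, mul_comm e 2, pow_mul, hP2, Ideal.span_singleton_pow,
      Ideal.span_singleton_mul_span_singleton]
    push_cast; rfl
  have hiff : ∀ e ≤ 1, ∀ I : Finset (Fin n),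
      (P ^ e * ∏ i ∈ I, L i).IsPrincipal ↔ DengLi.PEq l e I := fun e he I =>
    (DengLi.bridge φ _ _ (hJ e I)).trans (DengLi.assoc_iff l hlp hlinj e he I)
  refine ⟨fun e he I => ?_, ?_⟩
  · rw [hiff e he I]
    refine ⟨DengLi.elim' _ _ rfl rfl hneven l hli hleg12 hleg1j hlegij e he I, ?_⟩
    have h0 : DengLi.PEq l 0 ∅ := ⟨1, 0, 1, Or.inl rfl, by simp⟩
    have h1 := DengLi.exists_rel _ _ rfl rfl hneven l hlp hlinj hl1 hli hleg12 hleg1j hlegij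
    rintro (⟨rfl, rfl⟩ | ⟨rfl, rfl⟩ | ⟨rfl, rfl⟩ | ⟨rfl, rfl⟩)
    · exact h0
    · simpa using h0.compl
    · exact h1
    · rw [← Finset.compl_eq_univ_sdiff]
      exact h1.compl
  · apply DengLi.ideal_sq_inj
    rw [hprod, Ideal.span_singleton_pow, hα, hmM]
end
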